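/- arXiv:2507.05821 — 2 statements merged into one kernel-verified Lean document; each statement's English description precedes it below -/
import Mathlib

section
/- Let Γ be a connected cubic simple graph of girth 6 that is 4-arc-regular. Then Γ is isomorphic to the Heawood graph, and the distinguishing cost of Γ equals 5. -/
open SimpleGraph

/-- `x 0, x 1, …, x s` is an `s`-arc of `G`: consecutive vertices are adjacent and
`x i ≠ x (i+2)` whenever both are defined. -/
def IsNArc {V : Type*} (G : SimpleGraph V) (s : ℕ) (x : ℕ → V) : Prop :=
  (∀ i < s, G.Adj (x i) (x (i + 1))) ∧ ∀ i, i + 2 ≤ s → x i ≠ x (i + 2)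

/-- The automorphism group of `G` acts transitively on the `s`-arcs of `G`. -/
def IsNArcTransitive {V : Type*} (G : SimpleGraph V) (s : ℕ) : Prop :=
  ∀ x y : ℕ → V, IsNArc G s x → IsNArc G s y → ∃ φ : G ≃g G, ∀ i ≤ s, φ (x i) = y i
/-- `G` is `s`-arc-regular: its automorphism group acts transitively on `s`-arcs and the
only automorphism fixing an `s`-arc pointwise is the identity. -/
def IsNArcRegular {V : Type*} (G : SimpleGraph V) (s : ℕ) : Prop :=
  IsNArcTransitive G s ∧
    ∀ (φ : G ≃g G) (x : ℕ → V), IsNArc G s x → (∀ i ≤ s, φ (x i) = x i) → ∀ v, φ v = v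
/-- A set of vertices is distinguishing if the identity is the only automorphism of `G`
mapping it onto itself setwise. -/
def IsDistinguishing {V : Type*} (G : SimpleGraph V) (S : Set V) : Prop :=
  ∀ φ : G ≃g G, (⇑φ) '' S = S → ∀ v, φ v = v
/-- The Heawood graph: the point–line incidence graph of the Fano plane PG(2,2), whose
points (resp. lines) are the nonzero vectors of `(ZMod 2)³`, the point `p` lying on the
line `l` iff `p · l = 0`. -/
def heawoodGraph : SimpleGraph (Bool × {v : Fin 3 → ZMod 2 // v ≠ 0}) :=
  SimpleGraph.fromRel (fun p l =>
    p.1 = false ∧ l.1 = true ∧ ∑ i, p.2.1 i * l.2.1 i = 0)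

/-! A hexagon of a graph of girth 6 joins the ends of one of its 4-arcs by a common neighbour, so
by transitivity the ends of every 4-arc have one. Hence the vertices at even distance from a given
vertex and those at odd distance are the points and lines of a projective plane of order 2, and
coordinates with respect to a triangle of this plane identify the graph with the Heawood graph.
Elations and polarities, which also come from 4-arc-transitivity, provide a nontrivial symmetry of
every set of at most four vertices. Conversely, adding the third neighbour of the middle vertex to
a 4-arc and removing the vertex next to one end gives a set of five vertices whose stabiliser
fixes the 4-arc. -/

section ShortCycles

variable {V : Type*} {G : SimpleGraph V}

theorem not_adj_of_four_le_egirth (hG : 4 ≤ G.egirth) {a b c : V} (hab : G.Adj a b)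
    (hbc : G.Adj b c) : ¬G.Adj a c := by
  intro hac
  have hcycle : (Walk.cons hab (Walk.cons hbc (Walk.cons hac.symm Walk.nil))).IsCycle := by
    simp [Walk.cons_isCycle_iff, hab.ne, hab.ne', hbc.ne, hac.ne, hac.ne']
  exact absurd (hG.trans (egirth_le_length hcycle)) (by norm_num [← not_lt])

theorem eq_of_adj_of_five_le_egirth (hG : 5 ≤ G.egirth) {u v w w' : V} (huv : u ≠ v)
    (huw : G.Adj u w) (hvw : G.Adj v w) (huw' : G.Adj u w') (hvw' : G.Adj v w') : w = w' := by
  by_contra hne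
  have hcycle : (Walk.cons huw (Walk.cons hvw.symm
      (Walk.cons hvw' (Walk.cons huw'.symm Walk.nil)))).IsCycle := by
    simp [Walk.cons_isCycle_iff, huv, huv.symm, hne, huw.ne, hvw.ne', hvw'.ne, huw'.ne', huw.ne']
  exact absurd (hG.trans (egirth_le_length hcycle)) (by norm_num [← not_lt])

theorem not_adj_of_six_le_egirth (hG : 6 ≤ G.egirth) {a b c d e : V} (hab : G.Adj a b)
    (hbc : G.Adj b c) (hcd : G.Adj c d) (hde : G.Adj d e) : ¬G.Adj a e := by
  intro hae
  have htri := @not_adj_of_four_le_egirth V G (le_trans (by decide) hG)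
  have hcycle : (Walk.cons hab (Walk.cons hbc (Walk.cons hcd
      (Walk.cons hde (Walk.cons hae.symm Walk.nil))))).IsCycle := by
    have hac : a ≠ c := by rintro rfl; exact htri hcd hde hae
    have had : a ≠ d := by rintro rfl; exact htri hab hbc hcd.symm
    have hbd : b ≠ d := by rintro rfl; exact htri hab hde hae
    have hbe : b ≠ e := by rintro rfl; exact htri hbc hcd hde.symm
    have hce : c ≠ e := by rintro rfl; exact htri hab hbc hae
    simp [Walk.cons_isCycle_iff, hab.ne, hab.ne', hbc.ne, hcd.ne, hde.ne, hae.ne', hac.symm,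
      had.symm, hbd, hbe, hce, hac, had, hae.ne]
  exact absurd (hG.trans (egirth_le_length hcycle)) (by norm_num [← not_lt])

end ShortCycles

section CubicVertex

variable {V : Type*} {G : SimpleGraph V} {v a b d w : V}

theorem eq_or_eq_or_eq_of_ncard_neighborSet_eq_three (hv : (G.neighborSet v).ncard = 3)
    (ha : G.Adj v a) (hb : G.Adj v b) (hd : G.Adj v d) (hab : a ≠ b) (had : a ≠ d) (hbd : b ≠ d)
    (hw : G.Adj v w) : w = a ∨ w = b ∨ w = d := by
  have hsub : {a, b, d} ⊆ G.neighborSet v := by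
    rintro x (rfl | rfl | rfl) <;> assumption
  have hcard : ({a, b, d} : Set V).ncard = 3 := Set.ncard_eq_three.2 ⟨a, b, d, hab, had, hbd, rfl⟩
  have heq : {a, b, d} = G.neighborSet v := Set.eq_of_subset_of_ncard_le hsub
    (by rw [hv, hcard]) (Set.finite_of_ncard_ne_zero (by omega))
  exact heq.symm.subset hw

theorem exists_adj_ne_ne_of_ncard_neighborSet_eq_three (hv : (G.neighborSet v).ncard = 3)
    (a b : V) : ∃ d, G.Adj v d ∧ d ≠ a ∧ d ≠ b := by
  have hcard : ({a, b} : Set V).ncard < (G.neighborSet v).ncard :=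
    (Set.ncard_insert_le a {b}).trans_lt (by rw [Set.ncard_singleton, hv]; omega)
  obtain ⟨d, hd, hdab⟩ := Set.exists_mem_notMem_of_ncard_lt_ncard hcard
  exact ⟨d, hd, by grind, by grind⟩

theorem map_eq_or_eq_of_ncard_neighborSet_eq_three (hv : (G.neighborSet v).ncard = 3)
    (ha : G.Adj v a) (hb : G.Adj v b) (hd : G.Adj v d) (hab : a ≠ b) (had : a ≠ d) (hbd : b ≠ d)
    {φ : G ≃g G} (hφv : φ v = v) (hφa : φ a = a) : φ b = b ∨ φ b = d := by
  have hφb : G.Adj v (φ b) := by simpa only [hφv] using φ.map_adj_iff.2 hb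
  refine (eq_or_eq_or_eq_of_ncard_neighborSet_eq_three hv ha hb hd hab had hbd hφb).resolve_left ?_
  exact fun hba => hab (φ.injective (hφa.trans hba.symm))

theorem map_eq_of_ncard_neighborSet_eq_three (hv : (G.neighborSet v).ncard = 3)
    (ha : G.Adj v a) (hb : G.Adj v b) (hd : G.Adj v d) (hab : a ≠ b) (had : a ≠ d) (hbd : b ≠ d)
    {φ : G ≃g G} (hφv : φ v = v) (hφa : φ a = a) (hφb : φ b = b) : φ d = d :=
  (map_eq_or_eq_of_ncard_neighborSet_eq_three hv ha hd hb had hab hbd.symm hφv hφa).resolve_right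
    fun hdb => hbd (φ.injective (hφb.trans hdb.symm))

end CubicVertex

section Arcs

variable {V : Type*} {G : SimpleGraph V}

/-- In a graph of girth `s + 2` every shortest cycle closes up one of its `s`-arcs by a common
neighbour of the two ends; transitivity carries this to all `s`-arcs. -/
theorem IsNArcTransitive.exists_adj_adj {s : ℕ} (ht : IsNArcTransitive G s)
    (hG : G.egirth = s + 2) {x : ℕ → V} (hx : IsNArc G s x) :
    ∃ w, G.Adj (x 0) w ∧ G.Adj (x s) w := by
  have hcyclic : ¬G.IsAcyclic := by
    rw [← egirth_eq_top, hG]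
    exact ENat.natCast_ne_top (s + 2)
  obtain ⟨u, p, hp, hlen⟩ := exists_egirth_eq_length.2 hcyclic
  replace hlen : p.length = s + 2 := by rw [hG] at hlen; exact_mod_cast hlen.symm
  have harc : IsNArc G s p.getVert := by
    refine ⟨fun i hi => p.adj_getVert_succ (by omega), fun i hi h => ?_⟩
    have := hp.getVert_injOn' (show i ≤ p.length - 1 by omega)
      (show i + 2 ≤ p.length - 1 by omega) h
    omega
  obtain ⟨φ, hφ⟩ := ht _ _ harc hx
  refine ⟨φ (p.getVert (s + 1)), ?_, ?_⟩
  · have hlast : G.Adj (p.getVert (s + 1)) (p.getVert (s + 2)) := p.adj_getVert_succ (by omega)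
    rw [← hlen, p.getVert_length] at hlast
    rw [← hφ 0 (by omega), p.getVert_zero]
    exact φ.map_adj_iff.2 hlast.symm
  · rw [← hφ s le_rfl]
    exact φ.map_adj_iff.2 (p.adj_getVert_succ (by omega))

/-- The sequence `a, b, c, d, e, e, …`, used to present 4-arcs by their vertices. -/
def fourSeq (a b c d e : V) : ℕ → V := ([a, b, c, d].getD · e)

theorem isNArc_fourSeq {a b c d e : V} (hab : G.Adj a b) (hbc : G.Adj b c) (hcd : G.Adj c d)
    (hde : G.Adj d e) (hac : a ≠ c) (hbd : b ≠ d) (hce : c ≠ e) :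
    IsNArc G 4 (fourSeq a b c d e) := by
  refine ⟨fun i hi => ?_, fun i hi => ?_⟩
  · interval_cases i <;> assumption
  · have : i ≤ 2 := by omega
    interval_cases i <;> assumption

theorem IsNArcTransitive.exists_map_fourSeq (ht : IsNArcTransitive G 4)
    {a b c d e a' b' c' d' e' : V} (h : IsNArc G 4 (fourSeq a b c d e))
    (h' : IsNArc G 4 (fourSeq a' b' c' d' e')) :
    ∃ φ : G ≃g G, φ a = a' ∧ φ b = b' ∧ φ c = c' ∧ φ d = d' ∧ φ e = e' := by
  obtain ⟨φ, hφ⟩ := ht _ _ h h'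
  exact ⟨φ, hφ 0 (by omega), hφ 1 (by omega), hφ 2 (by omega), hφ 3 (by omega), hφ 4 le_rfl⟩

theorem IsNArcTransitive.exists_adj_adj_of_walk (ht : IsNArcTransitive G 4) (hG : G.egirth = 6)
    {a b c d e : V} (hab : G.Adj a b) (hbc : G.Adj b c) (hcd : G.Adj c d) (hde : G.Adj d e) :
    ∃ w, G.Adj a w ∧ G.Adj e w := by
  by_cases hac : a = c
  · exact ⟨d, hac ▸ hcd, hde.symm⟩
  by_cases hbd : b = d
  · exact ⟨b, hab, hbd ▸ hde.symm⟩
  by_cases hce : c = e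
  · exact ⟨b, hab, hce ▸ hbc.symm⟩
  exact ht.exists_adj_adj (by rw [hG]; norm_num) (isNArc_fourSeq hab hbc hcd hde hac hbd hce)

/-- The automorphism arises by exchanging the last vertex of a 4-arc `u, a, b, w, x` with the third
neighbour of `w`. -/
theorem IsNArcTransitive.exists_map_eq_and_map_ne (ht : IsNArcTransitive G 4)
    (hcubic : ∀ v, (G.neighborSet v).ncard = 3) {a b w : V} (hab : G.Adj a b) (hbw : G.Adj b w)
    (haw : a ≠ w) :
    ∃ φ : G ≃g G, (∀ v, G.Adj a v ∨ G.Adj b v → φ v = v) ∧ ∀ v, G.Adj w v → v ≠ b → φ v ≠ v := by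
  have third (v s t : V) := exists_adj_ne_ne_of_ncard_neighborSet_eq_three (hcubic v) s t
  have map_third {v s t r : V} := @map_eq_of_ncard_neighborSet_eq_three V G v s t r (hcubic v)
  obtain ⟨u, hau, hub, -⟩ := third a b b
  obtain ⟨x, hwx, hxb, -⟩ := third w b b
  obtain ⟨y, hwy, hyb, hyx⟩ := third w b x
  have harc {t : V} (hwt : G.Adj w t) (htb : t ≠ b) : IsNArc G 4 (fourSeq u a b w t) :=
    isNArc_fourSeq hau.symm hab hbw hwt hub haw htb.symm
  obtain ⟨φ, hu, ha, hb, hw, hx⟩ := ht.exists_map_fourSeq (harc hwx hxb) (harc hwy hyb)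
  refine ⟨φ, ?_, fun v hwv hvb hv => ?_⟩
  · rintro v (hav | hbv)
    · by_cases hvb : v = b
      · rwa [hvb]
      by_cases hvu : v = u
      · rwa [hvu]
      exact map_third hab hau hav hub.symm (Ne.symm hvb) (Ne.symm hvu) ha hb hu
    · by_cases hva : v = a
      · rwa [hva]
      by_cases hvw : v = w
      · rwa [hvw]
      exact map_third hab.symm hbw hbv haw (Ne.symm hva) (Ne.symm hvw) hb ha hw
  · have hvx : v ≠ x := by rintro rfl; exact hyx (hx.symm.trans hv)
    exact hyx (hx.symm.trans (map_third hbw.symm hwv hwx hvb.symm hxb.symm hvx hw hb hv))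

end Arcs

theorem not_isDistinguishing_of_map_mem {V : Type*} {G : SimpleGraph V} {S : Set V}
    (hS : S.Finite) {φ : G ≃g G} (hφS : ∀ v ∈ S, φ v ∈ S) {v : V} (hv : φ v ≠ v) :
    ¬IsDistinguishing G S := by
  intro hdist
  have himage : ⇑φ '' S = S := Set.eq_of_subset_of_ncard_le (Set.image_subset_iff.2 hφS)
    (Set.ncard_image_of_injective S φ.injective).ge hS
  exact hv (hdist φ himage v)

/-- `G` is, with the classes of `c` as points and lines, the incidence graph of a projective plane
of order 2: two vertices of one class have exactly one common neighbour, and every vertex has three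
neighbours. The two classes play symmetric roles, so each lemma also gives its dual. -/
structure IsFanoIncidence {V : Type*} (G : SimpleGraph V) (c : V → Bool) : Prop where
  color_ne : ∀ ⦃u v⦄, G.Adj u v → c u ≠ c v
  ncard_neighborSet : ∀ v, (G.neighborSet v).ncard = 3
  exists_adj_adj : ∀ ⦃u v⦄, c u = c v → ∃ w, G.Adj u w ∧ G.Adj v w
  eq_of_adj : ∀ ⦃u v w w'⦄, u ≠ v → G.Adj u w → G.Adj v w → G.Adj u w' → G.Adj v w' → w = w'

theorem IsNArcTransitive.exists_isFanoIncidence {V : Type*} {G : SimpleGraph V}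
    (ht : IsNArcTransitive G 4) (hconn : G.Connected)
    (hcubic : ∀ v, (G.neighborSet v).ncard = 3) (hG : G.egirth = 6) :
    ∃ c, IsFanoIncidence G c := by
  classical
  have hG4 : 4 ≤ G.egirth := by rw [hG]; norm_num
  have hG5 : 5 ≤ G.egirth := by rw [hG]; norm_num
  -- Two vertices will get the same colour iff they have a common neighbour.
  let Linked (u v : V) : Prop := ∃ w, G.Adj u w ∧ G.Adj v w
  have linked_comm {u v : V} : Linked u v → Linked v u := fun ⟨w, hu, hv⟩ => ⟨w, hv, hu⟩
  have linked_trans {u v w : V} : Linked u v → Linked v w → Linked u w :=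
    fun ⟨_, hu, hv⟩ ⟨_, hv', hw⟩ =>
    ht.exists_adj_adj_of_walk hG hu hv.symm hv' hw.symm
  have linked_step {x y u v : V} (hxy : G.Adj x y) (huv : G.Adj u v) : Linked x u → Linked y v :=
    fun ⟨_, hx, hu⟩ => ht.exists_adj_adj_of_walk hG hxy.symm hx hu.symm huv
  have not_linked {u v : V} (huv : G.Adj u v) : ¬Linked u v := fun ⟨_, hu, hv⟩ =>
    not_adj_of_four_le_egirth hG4 huv hv hu
  have exists_adj (v : V) : ∃ w, G.Adj v w :=
    Set.nonempty_of_ncard_ne_zero (s := G.neighborSet v) (by simp [hcubic])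
  obtain ⟨x⟩ := hconn.nonempty
  obtain ⟨y, hxy⟩ := exists_adj x
  have linked_or (v : V) : Linked x v ∨ Linked y v := by
    induction (reachable_iff_reflTransGen x v).1 (hconn x v) with
    | refl => exact .inl ⟨y, hxy, hxy⟩
    | tail _ huv ih => exact ih.symm.imp (linked_step hxy.symm huv) (linked_step hxy huv)
  refine ⟨fun v => decide (Linked x v), fun u v huv => ?_, hcubic, fun u v huv => ?_,
    fun _ _ _ _ => eq_of_adj_of_five_le_egirth hG5⟩
  · have hnot : ¬(Linked x u ∧ Linked x v) := fun ⟨hu, hv⟩ =>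
      not_linked huv (linked_trans (linked_comm hu) hv)
    have hor : Linked x u ∨ Linked x v := (linked_or u).imp_right (linked_step hxy.symm huv)
    rw [ne_eq, decide_eq_decide]
    exact fun hiff => hnot (hor.elim (fun hu => ⟨hu, hiff.1 hu⟩) fun hv => ⟨hiff.2 hv, hv⟩)
  · rw [decide_eq_decide] at huv
    by_cases hu : Linked x u
    · exact linked_trans (linked_comm hu) (huv.1 hu)
    · exact linked_trans (linked_comm ((linked_or u).resolve_left hu))
        ((linked_or v).resolve_left (mt huv.2 hu))

theorem heawoodGraph_adj {u v : Bool × {v : Fin 3 → ZMod 2 // v ≠ 0}} :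
    heawoodGraph.Adj u v ↔ u.1 ≠ v.1 ∧ ∑ i, u.2.1 i * v.2.1 i = 0 := by
  have hcomm : ∑ i, v.2.1 i * u.2.1 i = ∑ i, u.2.1 i * v.2.1 i :=
    Finset.sum_congr rfl fun i _ => mul_comm _ _
  rw [heawoodGraph, SimpleGraph.fromRel_adj, hcomm]
  grind

theorem bool_eq_of_ne_of_ne {a b d : Bool} (ha : a ≠ b) (hd : d ≠ b) : a = d :=
  (Bool.eq_not_of_ne ha).trans (Bool.eq_not_of_ne hd).symm

namespace IsFanoIncidence

variable {V : Type*} {G : SimpleGraph V} {c : V → Bool}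

theorem color_eq_of_adj_adj (h : IsFanoIncidence G c) {u v w : V} (hu : G.Adj u w)
    (hv : G.Adj v w) : c u = c v :=
  bool_eq_of_ne_of_ne (h.color_ne hu) (h.color_ne hv)

theorem exists_color_eq [Nonempty V] (h : IsFanoIncidence G c) (b : Bool) : ∃ v, c v = b := by
  obtain ⟨v⟩ := ‹Nonempty V›
  obtain ⟨w, hvw, -⟩ := h.exists_adj_adj (rfl : c v = c v)
  by_cases hv : c v = b
  · exact ⟨v, hv⟩
  · exact ⟨w, bool_eq_of_ne_of_ne (h.color_ne hvw).symm (Ne.symm hv)⟩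

section Coordinates

open Classical in
/-- The `ZMod 2`-valued indicator of non-incidence. As a function of a point it is the linear form
defining the line `v`. -/
noncomputable def nonadj (G : SimpleGraph V) (u v : V) : ZMod 2 := if G.Adj u v then 0 else 1

theorem nonadj_comm (u v : V) : nonadj G u v = nonadj G v u := by
  classical exact if_congr (G.adj_comm u v) rfl rfl

theorem nonadj_eq_zero {u v : V} : nonadj G u v = 0 ↔ G.Adj u v := by
  simp [nonadj]

theorem nonadj_eq_one {u v : V} : nonadj G u v = 1 ↔ ¬G.Adj u v := by
  simp [nonadj]

theorem nonadj_add_nonadj_add_nonadj (h : IsFanoIncidence G c) {l m p q r : V} (hp : G.Adj l p)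
    (hq : G.Adj l q) (hr : G.Adj l r) (hpq : p ≠ q) (hpr : p ≠ r) (hqr : q ≠ r)
    (hm : c m = c l) : nonadj G p m + nonadj G q m + nonadj G r m = 0 := by
  rcases eq_or_ne m l with rfl | hml
  · simp [nonadj, hp.symm, hq.symm, hr.symm]
  -- A line other than `l` meets `l` in exactly one of its three points.
  obtain ⟨w, hmw, hlw⟩ := h.exists_adj_adj hm
  have honly {x : V} (hx : G.Adj l x) (hxw : x ≠ w) : nonadj G x m = 1 :=
    nonadj_eq_one.2 fun hxm => hxw (h.eq_of_adj hml hxm.symm hx hmw hlw)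
  have hzero : nonadj G w m = 0 := nonadj_eq_zero.2 hmw.symm
  have htwo : (1 + 1 : ZMod 2) = 0 := rfl
  rcases eq_or_eq_or_eq_of_ncard_neighborSet_eq_three (h.ncard_neighborSet l) hp hq hr hpq hpr hqr
    hlw with rfl | rfl | rfl
  · rw [hzero, honly hq hpq.symm, honly hr hpr.symm, zero_add, htwo]
  · rw [hzero, honly hp hpq, honly hr hqr.symm, add_zero, htwo]
  · rw [hzero, honly hp hpr, honly hq hqr, htwo, add_zero]

/-- A triangle of the plane: three vertices `z b 0`, `z b 1`, `z b 2` of each colour `b`, where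
`z (!b) i` is the side opposite to `z b i`. It is a hexagon of the graph, and serves as the frame
of a homogeneous coordinate system. -/
structure IsFrame (G : SimpleGraph V) (c : V → Bool) (z : Bool → Fin 3 → V) : Prop where
  color_eq : ∀ b i, c (z b i) = b
  adj_iff : ∀ b i j, G.Adj (z b i) (z (!b) j) ↔ i ≠ j

theorem exists_isFrame [Nonempty V] (h : IsFanoIncidence G c) : ∃ z, IsFrame G c z := by
  obtain ⟨p₀, hp₀⟩ := h.exists_color_eq false
  obtain ⟨l₁, hpl₁, -⟩ :=
    exists_adj_ne_ne_of_ncard_neighborSet_eq_three (h.ncard_neighborSet p₀) p₀ p₀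
  obtain ⟨l₂, hpl₂, hl₂₁, -⟩ :=
    exists_adj_ne_ne_of_ncard_neighborSet_eq_three (h.ncard_neighborSet p₀) l₁ l₁
  obtain ⟨p₁, hlp₁, hp₁₀, -⟩ :=
    exists_adj_ne_ne_of_ncard_neighborSet_eq_three (h.ncard_neighborSet l₂) p₀ p₀
  obtain ⟨p₂, hlp₂, hp₂₀, -⟩ :=
    exists_adj_ne_ne_of_ncard_neighborSet_eq_three (h.ncard_neighborSet l₁) p₀ p₀
  have hp₁ : c p₁ = false := (h.color_eq_of_adj_adj hlp₁.symm hpl₂).trans hp₀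
  have hp₂ : c p₂ = false := (h.color_eq_of_adj_adj hlp₂.symm hpl₁).trans hp₀
  obtain ⟨l₀, hpl₁₀, hpl₂₀⟩ := h.exists_adj_adj (hp₁.trans hp₂.symm)
  have h₀ : ¬G.Adj p₀ l₀ := fun hadj => hl₂₁ <|
    (h.eq_of_adj hp₁₀ hlp₁.symm hpl₂ hpl₁₀ hadj).trans
      (h.eq_of_adj hp₂₀ hpl₂₀ hadj hlp₂.symm hpl₁)
  have h₁ : ¬G.Adj p₁ l₁ := fun hadj => hl₂₁ (h.eq_of_adj hp₁₀ hlp₁.symm hpl₂ hadj hpl₁)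
  have h₂ : ¬G.Adj p₂ l₂ := fun hadj => hl₂₁ (h.eq_of_adj hp₂₀ hadj hpl₂ hlp₂.symm hpl₁)
  have hadj : ∀ i j, G.Adj (![p₀, p₁, p₂] i) (![l₀, l₁, l₂] j) ↔ i ≠ j := by
    intro i j
    fin_cases i <;> fin_cases j <;>
      simp [h₀, h₁, h₂, hpl₁, hpl₂, hpl₁₀, hpl₂₀, hlp₁.symm, hlp₂.symm]
  refine ⟨fun b => bif b then ![l₀, l₁, l₂] else ![p₀, p₁, p₂], ?_, ?_⟩
  · have hl {p l : V} (hp : c p = false) (hpl : G.Adj p l) : c l = true := by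
      have := h.color_ne hpl
      grind
    rintro (_ | _) i <;> fin_cases i <;>
      simp [hp₀, hp₁, hp₂, hl hp₀ hpl₁, hl hp₀ hpl₂, hl hp₁ hpl₁₀]
  · rintro (_ | _) i j
    · exact hadj i j
    · exact (G.adj_comm _ _).trans ((hadj j i).trans ne_comm)

/-- Homogeneous coordinates with respect to `z`. They are unique since the only nonzero scalar
of `ZMod 2` is `1`. -/
noncomputable def coord (G : SimpleGraph V) (c : V → Bool) (z : Bool → Fin 3 → V) (v : V) :
    Fin 3 → ZMod 2 :=
  fun i => nonadj G v (z (!c v) i)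

variable {z : Bool → Fin 3 → V}

theorem coord_frame (hz : IsFrame G c z) (b : Bool) (i : Fin 3) :
    coord G c z (z b i) = Pi.single i 1 := by
  funext j
  simp only [coord, hz.color_eq, nonadj, hz.adj_iff, Pi.single_apply]
  grind

theorem coord_add_coord_add_coord (h : IsFanoIncidence G c) (hz : IsFrame G c z) {l p q r : V}
    (hp : G.Adj l p) (hq : G.Adj l q) (hr : G.Adj l r) (hpq : p ≠ q) (hpr : p ≠ r) (hqr : q ≠ r) :
    coord G c z p + coord G c z q + coord G c z r = 0 := by
  have hl : c l = !c p := Bool.eq_not_of_ne (h.color_ne hp)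
  funext i
  simp only [coord, Pi.add_apply, h.color_eq_of_adj_adj hq.symm hp.symm,
    h.color_eq_of_adj_adj hr.symm hp.symm]
  exact h.nonadj_add_nonadj_add_nonadj hp hq hr hpq hpr hqr ((hz.color_eq _ i).trans hl.symm)

theorem coord_ne_zero (h : IsFanoIncidence G c) (hz : IsFrame G c z) (v : V) :
    coord G c z v ≠ 0 := by
  intro hv
  have hadj (i : Fin 3) : G.Adj v (z (!c v) i) := nonadj_eq_zero.1 (congrFun hv i)
  have hside (i : Fin 3) (hi : i ≠ 2) : G.Adj (z (!c v) i) (z (c v) 2) := by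
    simpa using (hz.adj_iff (!c v) i 2).2 hi
  have hne : z (!c v) 0 ≠ z (!c v) 1 := fun heq =>
    (hz.adj_iff (!c v) 0 0).1 (heq ▸ (hz.adj_iff (!c v) 1 0).2 (by decide)) rfl
  have hv2 : v = z (c v) 2 := h.eq_of_adj hne (hadj 0).symm (hadj 1).symm
    (hside 0 (by decide)) (hside 1 (by decide))
  exact (hz.adj_iff (c v) 2 2).1 (hv2 ▸ hadj 2) rfl

theorem exists_third_coord (h : IsFanoIncidence G c) (hz : IsFrame G c z) {p q : V}
    (hpq : p ≠ q) (hc : c p = c q) : ∃ l r, G.Adj l p ∧ G.Adj l q ∧ G.Adj l r ∧ p ≠ r ∧ q ≠ r ∧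
      c r = c p ∧ coord G c z r = coord G c z p + coord G c z q := by
  obtain ⟨l, hpl, hql⟩ := h.exists_adj_adj hc
  obtain ⟨r, hlr, hrp, hrq⟩ :=
    exists_adj_ne_ne_of_ncard_neighborSet_eq_three (h.ncard_neighborSet l) p q
  refine ⟨l, r, hpl.symm, hql.symm, hlr, hrp.symm, hrq.symm,
    h.color_eq_of_adj_adj hlr.symm hpl, ?_⟩
  have hsum := h.coord_add_coord_add_coord hz hpl.symm hql.symm hlr hpq hrp.symm hrq.symm
  rw [eq_comm, ← sub_eq_zero, CharTwo.sub_eq_add, hsum]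

theorem eq_of_coord_eq (h : IsFanoIncidence G c) (hz : IsFrame G c z) {u v : V}
    (hc : c u = c v) (huv : coord G c z u = coord G c z v) : u = v := by
  by_contra hne
  obtain ⟨-, w, -, -, -, -, -, -, hw⟩ := h.exists_third_coord hz hne hc
  exact h.coord_ne_zero hz w (by rw [hw, huv, CharTwo.add_self_eq_zero])

/-- The frame generates the plane: coordinates are additive along lines, and the unit vectors
generate `(ZMod 2)³` by additions of distinct vectors. -/
theorem exists_mem_coord_eq (h : IsFanoIncidence G c) (hz : IsFrame G c z) {S : Set V} (b : Bool)
    (hframe : ∀ i, z b i ∈ S)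
    (hline : ∀ l p q r, G.Adj l p → G.Adj l q → G.Adj l r → p ≠ q → p ≠ r → q ≠ r →
      c p = b → p ∈ S → q ∈ S → r ∈ S)
    {a : Fin 3 → ZMod 2} (ha : a ≠ 0) : ∃ v ∈ S, c v = b ∧ coord G c z v = a := by
  let T : Set (Fin 3 → ZMod 2) := {a | ∃ v ∈ S, c v = b ∧ coord G c z v = a}
  have hsingle (i : Fin 3) : Pi.single i 1 ∈ T :=
    ⟨z b i, hframe i, hz.color_eq b i, coord_frame hz b i⟩
  have hadd {x y : Fin 3 → ZMod 2} (hx : x ∈ T) (hy : y ∈ T) (hxy : x ≠ y) : x + y ∈ T := by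
    obtain ⟨p, hpS, hp, rfl⟩ := hx
    obtain ⟨q, hqS, hq, rfl⟩ := hy
    have hpq : p ≠ q := ne_of_apply_ne _ hxy
    obtain ⟨l, r, hlp, hlq, hlr, hpr, hqr, hr, hsum⟩ :=
      h.exists_third_coord hz hpq (hp.trans hq.symm)
    exact ⟨r, hline l p q r hlp hlq hlr hpq hpr hqr hp hpS hqS, hr.trans hp, hsum⟩
  have hspan : ∀ a : Fin 3 → ZMod 2, a ≠ 0 → (∃ i, a = Pi.single i 1) ∨
      (∃ i j, i ≠ j ∧ a = Pi.single i 1 + Pi.single j 1) ∨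
      a = Pi.single 0 1 + Pi.single 1 1 + Pi.single 2 1 := by
    decide
  rcases hspan a ha with ⟨i, rfl⟩ | ⟨i, j, hij, rfl⟩ | rfl
  · exact hsingle i
  · exact hadd (hsingle i) (hsingle j) (by decide +revert)
  · exact hadd (hadd (hsingle 0) (hsingle 1) (by decide)) (hsingle 2) (by decide)

theorem exists_coord_eq (h : IsFanoIncidence G c) (hz : IsFrame G c z) (b : Bool)
    {a : Fin 3 → ZMod 2} (ha : a ≠ 0) : ∃ v, c v = b ∧ coord G c z v = a := by
  obtain ⟨v, -, hv⟩ := h.exists_mem_coord_eq hz (S := Set.univ) b (by simp) (by simp) ha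
  exact ⟨v, hv⟩

theorem nonadj_eq_sum_coord (h : IsFanoIncidence G c) (hz : IsFrame G c z) {p m : V}
    (hpm : c p ≠ c m) : nonadj G p m = ∑ i, coord G c z p i * coord G c z m i := by
  -- Both sides are additive along lines in `p`, and they agree on the frame.
  let S : Set V := {p | nonadj G p m = ∑ i, coord G c z p i * coord G c z m i}
  obtain ⟨v, hvS, hv, hcoord⟩ : ∃ v ∈ S, c v = c p ∧ coord G c z v = coord G c z p := by
    refine h.exists_mem_coord_eq hz (c p) (fun i => ?_) ?_ (h.coord_ne_zero hz p)
    · have hp : (!c m) = c p := (Bool.eq_not_of_ne hpm).symm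
      change nonadj G (z (c p) i) m = _
      rw [coord_frame hz]
      simp [Pi.single_apply, coord, hp, nonadj_comm m]
    · intro l q r s hq hr hs hqr hqs hrs hqp (hqS : _ = _) (hrS : _ = _)
      have hm : c m = c l :=
        bool_eq_of_ne_of_ne hpm.symm (hqp ▸ h.color_ne hq)
      have hsum := h.nonadj_add_nonadj_add_nonadj hq hr hs hqr hqs hrs hm
      have hcoord := h.coord_add_coord_add_coord hz hq hr hs hqr hqs hrs
      rw [← CharTwo.sub_eq_add, sub_eq_zero] at hsum hcoord
      change nonadj G s m = _
      rw [← hsum, hqS, hrS, ← hcoord, ← Finset.sum_add_distrib]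
      simp only [Pi.add_apply, add_mul]
  rwa [← h.eq_of_coord_eq hz hv hcoord]

theorem nonempty_iso_heawoodGraph [Nonempty V] (h : IsFanoIncidence G c) :
    Nonempty (G ≃g heawoodGraph) := by
  obtain ⟨z, hz⟩ := h.exists_isFrame
  let f (v : V) : Bool × {a : Fin 3 → ZMod 2 // a ≠ 0} :=
    (c v, ⟨coord G c z v, h.coord_ne_zero hz v⟩)
  have hinj : f.Injective := fun u v huv =>
    h.eq_of_coord_eq hz (congrArg Prod.fst huv) (congrArg (fun x => x.2.1) huv)
  have hsurj : f.Surjective := by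
    rintro ⟨b, a, ha⟩
    obtain ⟨v, rfl, rfl⟩ := h.exists_coord_eq hz b ha
    exact ⟨v, rfl⟩
  refine ⟨⟨Equiv.ofBijective f ⟨hinj, hsurj⟩, fun {u v} => ?_⟩⟩
  change heawoodGraph.Adj (f u) (f v) ↔ G.Adj u v
  rw [heawoodGraph_adj]
  refine ⟨fun ⟨hc, hsum⟩ => ?_, fun huv => ⟨h.color_ne huv, ?_⟩⟩
  · exact nonadj_eq_zero.1 ((h.nonadj_eq_sum_coord hz hc).trans hsum)
  · exact (h.nonadj_eq_sum_coord hz (h.color_ne huv)).symm.trans (nonadj_eq_zero.2 huv)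

end Coordinates

theorem adj_of_adj_iff_adj (h : IsFanoIncidence G c) {l m p q r : V}
    (hp : G.Adj l p) (hq : G.Adj l q) (hr : G.Adj l r) (hpq : p ≠ q) (hpr : p ≠ r) (hqr : q ≠ r)
    (hm : c m = c l) (hiff : G.Adj m p ↔ G.Adj m q) : G.Adj m r := by
  have hsum := h.nonadj_add_nonadj_add_nonadj hp hq hr hpq hpr hqr hm
  have heq : nonadj G p m = nonadj G q m := by
    classical
    exact if_congr (by rw [G.adj_comm p, hiff, G.adj_comm m]) rfl rfl
  rw [heq, CharTwo.add_self_eq_zero, zero_add, nonadj_eq_zero] at hsum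
  exact hsum.symm

section Symmetries

/-- In the plane, `φ` is the elation whose centre and axis are `a` and `b`. -/
theorem exists_elation (h : IsFanoIncidence G c) (ht : IsNArcTransitive G 4) {a b : V}
    (hab : G.Adj a b) : ∃ φ : G ≃g G, ∀ v, φ v = v ↔ G.Adj a v ∨ G.Adj b v := by
  obtain ⟨u, hau, hub, -⟩ :=
    exists_adj_ne_ne_of_ncard_neighborSet_eq_three (h.ncard_neighborSet a) b b
  obtain ⟨w, hbw, hwa, -⟩ :=
    exists_adj_ne_ne_of_ncard_neighborSet_eq_three (h.ncard_neighborSet b) a a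
  obtain ⟨φ, hfix, hmove⟩ := ht.exists_map_eq_and_map_ne h.ncard_neighborSet hab hbw hwa.symm
  -- The image of the only common neighbour of two fixed vertices is fixed.
  have hfix_third {s t v : V} (hsv : s ≠ v) (hs : φ s = s) (hv : φ v = v) (hst : G.Adj s t)
      (hvt : G.Adj v t) : φ t = t :=
    h.eq_of_adj hsv (by simpa only [hs] using φ.map_adj_iff.2 hst)
      (by simpa only [hv] using φ.map_adj_iff.2 hvt) hst hvt
  have hmove_a {v : V} (hc : c v = c a) (hbv : ¬G.Adj b v) : φ v ≠ v := fun hv => by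
    obtain ⟨t, hwt, hvt⟩ := h.exists_adj_adj ((h.color_eq_of_adj_adj hbw.symm hab).trans hc.symm)
    exact hmove t hwt (by rintro rfl; exact hbv hvt.symm)
      (hfix_third (by rintro rfl; exact hbv hbw) (hfix w (.inr hbw)) hv hwt hvt)
  have hmove_b {v : V} (hc : c v = c b) (hav : ¬G.Adj a v) : φ v ≠ v := fun hv => by
    obtain ⟨t, hut, hvt⟩ :=
      h.exists_adj_adj ((h.color_eq_of_adj_adj hau.symm hab.symm).trans hc.symm)
    have hbt : ¬G.Adj b t := fun hbt =>
      hav (h.eq_of_adj hub hut hbt hau.symm hab.symm ▸ hvt.symm)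
    exact hmove_a (h.color_eq_of_adj_adj hut.symm hau) hbt
      (hfix_third (by rintro rfl; exact hav hau) (hfix u (.inl hau)) hv hut hvt)
  refine ⟨φ, fun v => ⟨fun hv => ?_, hfix v⟩⟩
  by_contra! hnot
  rcases eq_or_ne (c v) (c a) with hc | hc
  · exact hmove_a hc hnot.2 hv
  · exact hmove_b (bool_eq_of_ne_of_ne hc (h.color_ne hab).symm) hnot.1 hv

/-- Criterion from the elation of an edge `ab`: it fixes `N(a) ∪ N(b)`, and around each vertex of
`N(a) ∪ N(b)` other than `a` and `b` it exchanges the two neighbours it moves. -/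
theorem not_isDistinguishing_of_elation (h : IsFanoIncidence G c) (ht : IsNArcTransitive G 4)
    {a b : V} (hab : G.Adj a b) {S : Set V} (hfin : S.Finite)
    (hS : ∀ v ∈ S, G.Adj a v ∨ G.Adj b v ∨ ∃ w ∈ S, ∃ u, w ≠ v ∧ w ≠ a ∧ w ≠ b ∧
      (G.Adj a u ∨ G.Adj b u) ∧ G.Adj u v ∧ G.Adj u w) :
    ¬IsDistinguishing G S := by
  obtain ⟨φ, hφ⟩ := h.exists_elation ht hab
  have hφa : φ a = a := (hφ a).2 (.inr hab.symm)
  have hφb : φ b = b := (hφ b).2 (.inl hab)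
  have third (v s t : V) := exists_adj_ne_ne_of_ncard_neighborSet_eq_three
    (h.ncard_neighborSet v) s t
  obtain ⟨x, hbx, hxa, -⟩ := third b a a
  obtain ⟨y, hxy, hyb, -⟩ := third x b b
  have hy : φ y ≠ y := fun hy => by
    rcases (hφ y).1 hy with hay | hby
    · exact hyb (h.eq_of_adj hxa hxy hay hbx.symm hab)
    · exact h.color_ne hxy (h.color_eq_of_adj_adj hbx.symm hby.symm)
  refine not_isDistinguishing_of_map_mem hfin (fun v hv => ?_) hy
  by_cases hfix : φ v = v
  · rwa [hfix]
  obtain hav | hbv | ⟨w, hw, u, hwv, hwa, hwb, hu, huv, huw⟩ := hS v hv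
  · exact absurd ((hφ v).2 (.inl hav)) hfix
  · exact absurd ((hφ v).2 (.inr hbv)) hfix
  obtain ⟨t, ht, hut, htw⟩ : ∃ t, φ t = t ∧ G.Adj u t ∧ t ≠ w :=
    hu.elim (fun hu => ⟨a, hφa, hu.symm, hwa.symm⟩) fun hu => ⟨b, hφb, hu.symm, hwb.symm⟩
  have htv : t ≠ v := by rintro rfl; exact hfix ht
  rw [(map_eq_or_eq_of_ncard_neighborSet_eq_three (h.ncard_neighborSet u) hut huv huw htv htw
    hwv.symm ((hφ u).2 hu) ht).resolve_left hfix]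
  exact hw

/-- A symmetry of the Heawood graph exchanging points with lines: it reverses the 4-arc
`p, l, q, n, x` into `m, x, n, q, l`, and this forces it to exchange `p` and `m`. -/
theorem not_isDistinguishing_of_polarity (h : IsFanoIncidence G c) (ht : IsNArcTransitive G 4)
    {l p q r x m n : V} (hlp : G.Adj l p) (hlq : G.Adj l q) (hlr : G.Adj l r) (hpq : p ≠ q)
    (hpr : p ≠ r) (hqr : q ≠ r) (hxm : G.Adj x m) (hxn : G.Adj x n) (hlx : ¬G.Adj l x)
    (hqn : G.Adj q n) (hrm : G.Adj r m) {S : Set V}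
    (hS : ∀ v, v ∈ S ↔ v = p ∨ v = q ∨ v = m ∨ v = n) : ¬IsDistinguishing G S := by
  have hln : l ≠ n := by rintro rfl; exact hlx hxn.symm
  have hlm : l ≠ m := by rintro rfl; exact hlx hxm.symm
  have hqx : q ≠ x := by rintro rfl; exact hlx hlq
  have hrx : r ≠ x := by rintro rfl; exact hlx hlr
  have hmn : m ≠ n := by
    rintro rfl
    exact hqr (h.eq_of_adj hlm hlq hqn.symm hlr hrm.symm)
  have harc : IsNArc G 4 (fourSeq p l q n x) :=
    isNArc_fourSeq hlp.symm hlq hqn hxn.symm hpq hln hqx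
  have harc' : IsNArc G 4 (fourSeq m x n q l) :=
    isNArc_fourSeq hxm.symm hxn hqn.symm hlq.symm hmn hqx.symm hln.symm
  obtain ⟨φ, hφp, hφl, hφq, hφn, hφx⟩ := ht.exists_map_fourSeq harc harc'
  have hmap {u v : V} : G.Adj u v → G.Adj (φ u) (φ v) := φ.map_adj_iff.2
  have hφr_ne : φ r ≠ m := fun heq => hpr (φ.injective (hφp.trans heq.symm))
  have hφm : φ m = p := by
    have hlφm : G.Adj l (φ m) := hφx ▸ hmap hxm
    rcases eq_or_eq_or_eq_of_ncard_neighborSet_eq_three (h.ncard_neighborSet l) hlp hlq hlr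
      hpq hpr hqr hlφm with heq | heq | heq
    · exact heq
    · exact absurd (φ.injective (heq.trans hφn.symm)) hmn
    · have hxφr : G.Adj x (φ r) := hφl ▸ hmap hlr
      have hrφr : G.Adj r (φ r) := by simpa only [heq] using (hmap hrm).symm
      exact absurd (h.eq_of_adj hrx hrφr hxφr hrm hxm) hφr_ne
  have hfin : S.Finite := by
    have : S = {p, q, m, n} := Set.ext hS
    rw [this]
    exact Set.toFinite _
  have hpm : p ≠ m := by
    rintro rfl
    exact h.color_ne hlp (h.color_eq_of_adj_adj hlr hrm.symm)
  refine not_isDistinguishing_of_map_mem hfin (φ := φ) (v := p) (fun v hv => ?_)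
    (by rw [hφp]; exact hpm.symm)
  rcases (hS v).1 hv with rfl | rfl | rfl | rfl <;> grind

/-- An elation whose centre `t` lies on the line `l` but whose axis `k` is not `l` exchanges the two
points of `l` other than `t`. -/
theorem not_isDistinguishing_of_pair (h : IsFanoIncidence G c) (ht : IsNArcTransitive G 4)
    {k l p q t : V} (hlp : G.Adj l p) (hlq : G.Adj l q) (hlt : G.Adj l t) (hpq : p ≠ q)
    (hpt : p ≠ t) (hqt : q ≠ t) (hkt : G.Adj k t) {S : Set V} (hfin : S.Finite) (hpS : p ∈ S)
    (hqS : q ∈ S) (hS : ∀ v ∈ S, v ≠ p → v ≠ q → G.Adj t v ∨ G.Adj k v) :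
    ¬IsDistinguishing G S := by
  have hne_k {s : V} (hls : G.Adj l s) : s ≠ k := by
    rintro rfl
    exact h.color_ne hkt (h.color_eq_of_adj_adj hls.symm hlt.symm)
  refine h.not_isDistinguishing_of_elation ht hkt.symm hfin fun v hv => ?_
  by_cases hvp : v = p
  · subst hvp
    exact .inr (.inr ⟨q, hqS, l, hpq.symm, hqt, hne_k hlq, .inl hlt.symm, hlp, hlq⟩)
  by_cases hvq : v = q
  · subst hvq
    exact .inr (.inr ⟨p, hpS, l, hpq, hpt, hne_k hlp, .inl hlt.symm, hlq, hlp⟩)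
  exact (hS v hv hvp hvq).imp_right .inl

theorem not_isDistinguishing_of_two_pairs (h : IsFanoIncidence G c) (ht : IsNArcTransitive G 4)
    {k l p q t m n x : V} (hlp : G.Adj l p) (hlq : G.Adj l q) (hlt : G.Adj l t) (hpq : p ≠ q)
    (hpt : p ≠ t) (hqt : q ≠ t) (hxm : G.Adj x m) (hxn : G.Adj x n) (hxk : G.Adj x k) (hmn : m ≠ n)
    (hmk : m ≠ k) (hnk : n ≠ k) (hkt : G.Adj k t) : ¬IsDistinguishing G {p, q, m, n} := by
  have hne_k {s : V} (hls : G.Adj l s) : s ≠ k := by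
    rintro rfl
    exact h.color_ne hkt (h.color_eq_of_adj_adj hls.symm hlt.symm)
  have hne_t {s : V} (hxs : G.Adj x s) : s ≠ t := by
    rintro rfl
    exact h.color_ne hkt (h.color_eq_of_adj_adj hxk.symm hxs.symm)
  refine h.not_isDistinguishing_of_elation ht hkt.symm (Set.toFinite _) ?_
  rintro v (rfl | rfl | rfl | rfl) <;> refine .inr (.inr ?_)
  · exact ⟨q, by simp, l, hpq.symm, hqt, hne_k hlq, .inl hlt.symm, hlp, hlq⟩
  · exact ⟨p, by simp, l, hpq, hpt, hne_k hlp, .inl hlt.symm, hlq, hlp⟩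
  · exact ⟨n, by simp, x, hmn.symm, hne_t hxn, hnk, .inr hxk.symm, hxm, hxn⟩
  · exact ⟨m, by simp, x, hmn, hne_t hxm, hmk, .inr hxk.symm, hxn, hxm⟩

theorem not_isDistinguishing_of_collinear (h : IsFanoIncidence G c) (ht : IsNArcTransitive G 4)
    {l m : V} (hlm : c l = c m) {S : Set V} (hfin : S.Finite)
    (hS : ∀ v ∈ S, G.Adj l v ∨ v = m) : ¬IsDistinguishing G S := by
  obtain ⟨a, hla, hma⟩ := h.exists_adj_adj hlm
  refine h.not_isDistinguishing_of_elation ht hla hfin fun v hv => ?_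
  rcases hS v hv with hlv | rfl
  · exact .inl hlv
  · exact .inr (.inl hma.symm)

theorem not_isDistinguishing_of_adj_iff_adj (h : IsFanoIncidence G c) (ht : IsNArcTransitive G 4)
    {p q r m : V} (hpq : p ≠ q) (hcq : c p = c q) (hcr : c p = c r) (hcm : c m ≠ c p)
    (hiff : G.Adj m p ↔ G.Adj m q) {S : Set V} (hfin : S.Finite) (hp : p ∈ S) (hq : q ∈ S)
    (hS : ∀ v ∈ S, v = p ∨ v = q ∨ v = r ∨ v = m) : ¬IsDistinguishing G S := by
  obtain ⟨l, hpl, hql⟩ := h.exists_adj_adj hcq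
  obtain ⟨t, hlt, htp, htq⟩ :=
    exists_adj_ne_ne_of_ncard_neighborSet_eq_three (h.ncard_neighborSet l) p q
  obtain ⟨k, htk, hrk⟩ := h.exists_adj_adj ((h.color_eq_of_adj_adj hlt.symm hpl).trans hcr)
  have hcl : c m = c l := bool_eq_of_ne_of_ne hcm (h.color_ne hpl).symm
  have hmt : G.Adj m t :=
    h.adj_of_adj_iff_adj hpl.symm hql.symm hlt hpq htp.symm htq.symm hcl hiff
  refine h.not_isDistinguishing_of_pair ht hpl.symm hql.symm hlt hpq htp.symm htq.symm htk.symm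
    hfin hp hq fun v hv hvp hvq => ?_
  obtain rfl | rfl := ((hS v hv).resolve_left hvp).resolve_left hvq
  · exact .inr hrk.symm
  · exact .inl hmt.symm

theorem not_isDistinguishing_of_three_points (h : IsFanoIncidence G c) (ht : IsNArcTransitive G 4)
    {p q r m : V} (hpq : p ≠ q) (hpr : p ≠ r) (hqr : q ≠ r) (hcq : c p = c q) (hcr : c p = c r)
    (hcm : c m ≠ c p) {S : Set V} (hfin : S.Finite) (hp : p ∈ S) (hq : q ∈ S) (hr : r ∈ S)
    (hS : ∀ v ∈ S, v = p ∨ v = q ∨ v = r ∨ v = m) : ¬IsDistinguishing G S := by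
  -- Two of the three points are both on `m` or both off `m`.
  by_cases hmpq : G.Adj m p ↔ G.Adj m q
  · exact h.not_isDistinguishing_of_adj_iff_adj ht hpq hcq hcr hcm hmpq hfin hp hq hS
  by_cases hmpr : G.Adj m p ↔ G.Adj m r
  · exact h.not_isDistinguishing_of_adj_iff_adj ht hpr hcr hcq hcm hmpr hfin hp hr
      fun v hv => by have := hS v hv; tauto
  · exact h.not_isDistinguishing_of_adj_iff_adj ht hqr (hcq.symm.trans hcr) hcq.symm (hcq ▸ hcm)
      (by tauto) hfin hq hr fun v hv => by have := hS v hv; tauto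

theorem not_isDistinguishing_of_four_points (h : IsFanoIncidence G c) (ht : IsNArcTransitive G 4)
    {p q r s : V} (hpq : p ≠ q) (hpr : p ≠ r) (hps : p ≠ s) (hqr : q ≠ r) (hqs : q ≠ s)
    (hrs : r ≠ s) (hcq : c p = c q) (hcr : c p = c r) (hcs : c p = c s) :
    ¬IsDistinguishing G {p, q, r, s} := by
  obtain ⟨l, hpl, hql⟩ := h.exists_adj_adj hcq
  obtain ⟨k, hrk, hsk⟩ := h.exists_adj_adj (hcr.symm.trans hcs)
  obtain ⟨t, hlt, htp, htq⟩ :=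
    exists_adj_ne_ne_of_ncard_neighborSet_eq_three (h.ncard_neighborSet l) p q
  have hkl : c k = c l :=
    bool_eq_of_ne_of_ne (h.color_ne hrk).symm (hcr ▸ (h.color_ne hpl).symm)
  obtain ⟨w, hkw, hlw⟩ := h.exists_adj_adj hkl
  have third {v x y z t : V} := @eq_or_eq_or_eq_of_ncard_neighborSet_eq_three V G v x y z t
    (h.ncard_neighborSet v)
  obtain rfl | rfl | rfl : w = p ∨ w = q ∨ w = t :=
    third hpl.symm hql.symm hlt hpq htp.symm htq.symm hlw
  · exact h.not_isDistinguishing_of_pair ht hrk.symm hsk.symm hkw hrs hpr.symm hps.symm hlw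
      (Set.toFinite _) (by simp) (by simp) (by simp +contextual [hpl.symm, hql.symm])
  · exact h.not_isDistinguishing_of_pair ht hrk.symm hsk.symm hkw hrs hqr.symm hqs.symm hlw
      (Set.toFinite _) (by simp) (by simp) (by simp +contextual [hpl.symm, hql.symm])
  · exact h.not_isDistinguishing_of_pair ht hpl.symm hql.symm hlt hpq htp.symm htq.symm hkw
      (Set.toFinite _) (by simp) (by simp) (by simp +contextual [hrk.symm, hsk.symm])

theorem not_isDistinguishing_of_two_points_two_lines (h : IsFanoIncidence G c)
    (ht : IsNArcTransitive G 4) {p q m n : V} (hpq : p ≠ q) (hmn : m ≠ n) (hcpq : c p = c q)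
    (hcmn : c m = c n) (hcpm : c p ≠ c m) : ¬IsDistinguishing G {p, q, m, n} := by
  obtain ⟨l, hpl, hql⟩ := h.exists_adj_adj hcpq
  obtain ⟨x, hmx, hnx⟩ := h.exists_adj_adj hcmn
  by_cases hlx : G.Adj l x
  · refine h.not_isDistinguishing_of_elation ht hlx (Set.toFinite _) ?_
    rintro v (rfl | rfl | rfl | rfl) <;> simp [hpl.symm, hql.symm, hmx.symm, hnx.symm]
  obtain ⟨r, hlr, hrp, hrq⟩ :=
    exists_adj_ne_ne_of_ncard_neighborSet_eq_three (h.ncard_neighborSet l) p q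
  have polarity {m n : V} (hmn : m ≠ n) (hmx : G.Adj m x) (hnx : G.Adj n x) (hnl : c n = c l)
      (hrm : G.Adj r m) {S : Set V} (hS : ∀ v, v ∈ S ↔ v = p ∨ v = q ∨ v = m ∨ v = n) :
      ¬IsDistinguishing G S := by
    obtain ⟨w, hnw, hlw⟩ := h.exists_adj_adj hnl
    rcases eq_or_eq_or_eq_of_ncard_neighborSet_eq_three (h.ncard_neighborSet l) hpl.symm hql.symm
      hlr hpq hrp.symm hrq.symm hlw with rfl | rfl | rfl
    · exact h.not_isDistinguishing_of_polarity ht hql.symm hpl.symm hlr hpq.symm hrq.symm hrp.symm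
        hmx.symm hnx.symm hlx hnw.symm hrm (by grind)
    · exact h.not_isDistinguishing_of_polarity ht hpl.symm hql.symm hlr hpq hrp.symm hrq.symm
        hmx.symm hnx.symm hlx hnw.symm hrm hS
    · exact absurd (h.eq_of_adj hmn hrm.symm hnw hmx hnx ▸ hlr) hlx
  have hml : c m = c l := bool_eq_of_ne_of_ne hcpm.symm (h.color_ne hpl).symm
  by_cases hrm : G.Adj r m
  · exact polarity hmn hmx hnx (hcmn.symm.trans hml) hrm (by simp)
  by_cases hrn : G.Adj r n
  · exact polarity hmn.symm hnx hmx hml hrn (by grind)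
  have hrx : c r = c x := (h.color_eq_of_adj_adj hlr.symm hpl).trans
    (bool_eq_of_ne_of_ne hcpm (h.color_ne hmx).symm)
  obtain ⟨k, hrk, hxk⟩ := h.exists_adj_adj hrx
  exact h.not_isDistinguishing_of_two_pairs ht hpl.symm hql.symm hlr hpq hrp.symm hrq.symm
    hmx.symm hnx.symm hxk hmn (by rintro rfl; exact hrm hrk) (by rintro rfl; exact hrn hrk) hrk.symm

theorem exists_eq_of_ncard_le_one [Nonempty V] (h : IsFanoIncidence G c) {b : Bool} {A : Set V}
    (hA : ∀ v ∈ A, c v = b) (hfin : A.Finite) (hcard : A.ncard ≤ 1) :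
    ∃ p, c p = b ∧ ∀ v ∈ A, v = p := by
  rcases A.eq_empty_or_nonempty with rfl | ⟨p, hp⟩
  · simpa using h.exists_color_eq b
  · exact ⟨p, hA p hp, fun v hv => (Set.ncard_le_one hfin).1 hcard v hv p hp⟩

theorem exists_adj_of_ncard_le_two [Nonempty V] (h : IsFanoIncidence G c) {b : Bool} {A : Set V}
    (hA : ∀ v ∈ A, c v = b) (hfin : A.Finite) (hcard : A.ncard ≤ 2) :
    ∃ l, c l ≠ b ∧ ∀ v ∈ A, G.Adj l v := by
  obtain ⟨p, hp, hpA⟩ : ∃ p, c p = b ∧ (A \ {p}).ncard ≤ 1 := by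
    rcases A.eq_empty_or_nonempty with rfl | ⟨p, hp⟩
    · simpa using h.exists_color_eq b
    · have := Set.ncard_sdiff_singleton_add_one hp hfin
      exact ⟨p, hA p hp, by omega⟩
  obtain ⟨q, hq, hqA⟩ := h.exists_eq_of_ncard_le_one (fun v hv => hA v hv.1) hfin.sdiff hpA
  obtain ⟨l, hpl, hql⟩ := h.exists_adj_adj (hp.trans hq.symm)
  refine ⟨l, hp ▸ (h.color_ne hpl).symm, fun v hv => ?_⟩
  by_cases hvp : v = p
  · exact hvp ▸ hpl.symm
  · exact hqA v ⟨hv, hvp⟩ ▸ hql.symm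

theorem not_isDistinguishing_union [Nonempty V] (h : IsFanoIncidence G c)
    (ht : IsNArcTransitive G 4) {b : Bool} {A B : Set V} (hA : ∀ v ∈ A, c v = b)
    (hB : ∀ v ∈ B, c v ≠ b) (hAfin : A.Finite) (hBfin : B.Finite) (hBA : B.ncard ≤ A.ncard)
    (hAB : A.ncard + B.ncard ≤ 4) : ¬IsDistinguishing G (A ∪ B) := by
  rcases le_or_gt B.ncard 1 with hB1 | hB2
  · obtain ⟨m, hm, hmB⟩ := h.exists_eq_of_ncard_le_one
      (fun v hv => Bool.eq_not_of_ne (hB v hv)) hBfin hB1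
    have hmb : c m ≠ b := by simp [hm]
    obtain hA2 | hA3 | hA4 : A.ncard ≤ 2 ∨ A.ncard = 3 ∨ A.ncard = 4 := by omega
    · obtain ⟨l, hl, hlA⟩ := h.exists_adj_of_ncard_le_two hA hAfin hA2
      exact h.not_isDistinguishing_of_collinear ht (bool_eq_of_ne_of_ne hl hmb)
        (hAfin.union hBfin) (fun v hv => hv.imp (hlA v) (hmB v))
    · obtain ⟨p, q, r, hpq, hpr, hqr, rfl⟩ := Set.ncard_eq_three.1 hA3
      have hcolor {v : V} (hv : v ∈ ({p, q, r} : Set V)) : c p = c v :=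
        (hA p (by simp)).trans (hA v hv).symm
      refine h.not_isDistinguishing_of_three_points ht (m := m) hpq hpr hqr (hcolor (by simp))
        (hcolor (by simp)) (hA p (by simp) ▸ hmb) (hAfin.union hBfin) (by simp) (by simp) (by simp)
        fun v hv => ?_
      rcases hv with hv | hv
      · grind
      · simp [hmB v hv]
    · obtain ⟨p, q, r, s, hpq, hpr, hps, hqr, hqs, hrs, rfl⟩ := Set.ncard_eq_four.1 hA4
      have hB0 : B = ∅ := (Set.ncard_eq_zero hBfin).1 (by omega)
      have hcolor {v : V} (hv : v ∈ ({p, q, r, s} : Set V)) : c p = c v :=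
        (hA p (by simp)).trans (hA v hv).symm
      rw [hB0, Set.union_empty]
      exact h.not_isDistinguishing_of_four_points ht hpq hpr hps hqr hqs hrs
        (hcolor (by simp)) (hcolor (by simp)) (hcolor (by simp))
  · obtain ⟨p, q, hpq, rfl⟩ := Set.ncard_eq_two.1 (show A.ncard = 2 by omega)
    obtain ⟨m, n, hmn, rfl⟩ := Set.ncard_eq_two.1 (show B.ncard = 2 by omega)
    simp only [Set.mem_insert_iff, Set.mem_singleton_iff, forall_eq_or_imp, forall_eq] at hA hB
    have hset : ({p, q} ∪ {m, n} : Set V) = {p, q, m, n} := by grind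
    rw [hset]
    exact h.not_isDistinguishing_of_two_points_two_lines ht hpq hmn (hA.1.trans hA.2.symm)
      (bool_eq_of_ne_of_ne hB.1 hB.2) (hA.1 ▸ hB.1.symm)

theorem five_le_encard_of_isDistinguishing [Nonempty V] (h : IsFanoIncidence G c)
    (ht : IsNArcTransitive G 4) {S : Set V} (hS : IsDistinguishing G S) : 5 ≤ S.encard := by
  by_contra! hlt
  have hfin : S.Finite := Set.encard_ne_top_iff.1 hlt.ne_top
  have hcard : S.ncard ≤ 4 := by
    rw [← hfin.cast_ncard_eq] at hlt
    have : S.ncard < 5 := by exact_mod_cast hlt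
    omega
  let A (b : Bool) : Set V := {v ∈ S | c v = b}
  have hA (b : Bool) : (A b).Finite := hfin.subset (Set.sep_subset S _)
  have hunion (b : Bool) : A b ∪ A (!b) = S := by
    ext v
    by_cases hv : c v = b <;> simp [A, hv, Bool.eq_not_iff]
  have hdisj : Disjoint (A false) (A true) :=
    Set.disjoint_left.2 fun v hv hv' => Bool.false_ne_true (hv.2.symm.trans hv'.2)
  have hsum : (A false).ncard + (A true).ncard ≤ 4 := by
    rwa [← Set.ncard_union_eq hdisj (hA _) (hA _), show A false ∪ A true = S from hunion false]
  obtain ⟨b, hle, hsum⟩ : ∃ b, (A (!b)).ncard ≤ (A b).ncard ∧ (A b).ncard + (A (!b)).ncard ≤ 4 := by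
    rcases le_total (A true).ncard (A false).ncard with hle | hle
    · exact ⟨false, hle, hsum⟩
    · exact ⟨true, hle, by rwa [add_comm]⟩
  exact h.not_isDistinguishing_union ht (fun v hv => hv.2) (fun v hv => by simp [hv.2])
    (hA b) (hA (!b)) hle hsum (hunion b ▸ hS)

end Symmetries

end IsFanoIncidence

section Rigidity

variable {V : Type*} {G : SimpleGraph V} {a b x d y e : V}

/-- `{a, b, x, y, e}` induces in `G` the path `a, b, x, y` together with the isolated vertex `e`.
The distinguishing sets of five vertices are found among the sets of this shape. -/
structure InducesPathAndVertex (G : SimpleGraph V) (a b x y e : V) : Prop where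
  ne_left : a ≠ x
  ne_right : b ≠ y
  adj_left : ∀ v ∈ ({a, b, x, y, e} : Set V), G.Adj a v ↔ v = b
  adj_inner_left : ∀ v ∈ ({a, b, x, y, e} : Set V), G.Adj b v ↔ v = a ∨ v = x
  adj_inner_right : ∀ v ∈ ({a, b, x, y, e} : Set V), G.Adj x v ↔ v = b ∨ v = y
  adj_right : ∀ v ∈ ({a, b, x, y, e} : Set V), G.Adj y v ↔ v = x
  not_adj : ∀ v ∈ ({a, b, x, y, e} : Set V), ¬G.Adj e v

theorem inducesPathAndVertex_of_six_le_egirth (hG : 6 ≤ G.egirth) (hab : G.Adj a b)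
    (hbx : G.Adj b x) (hxd : G.Adj x d) (hde : G.Adj d e) (hxy : G.Adj x y) (hax : a ≠ x)
    (hbd : b ≠ d) (hxe : x ≠ e) (hyb : y ≠ b) (hyd : y ≠ d) : InducesPathAndVertex G a b x y e := by
  have htri {u v w : V} : G.Adj u v → G.Adj v w → ¬G.Adj u w :=
    not_adj_of_four_le_egirth (le_trans (by decide) hG)
  have hquad {u v w w' : V} : u ≠ v → G.Adj u w → G.Adj v w → G.Adj u w' → G.Adj v w' → w = w' :=
    eq_of_adj_of_five_le_egirth (le_trans (by decide) hG)
  have hnax : ¬G.Adj a x := htri hab hbx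
  have hnby : ¬G.Adj b y := htri hbx hxy
  have hnxe : ¬G.Adj x e := htri hxd hde
  have hnay : ¬G.Adj a y := fun h => hyb (hquad hax hab hbx.symm h hxy).symm
  have hnbe : ¬G.Adj b e := fun h => hxe (hquad hbd hbx hxd.symm h hde)
  have hnye : ¬G.Adj y e := fun h => hyd (hquad hxe hxy h.symm hxd hde.symm)
  have hnae : ¬G.Adj a e := not_adj_of_six_le_egirth hG hab hbx hxd hde
  constructor
  case ne_left => exact hax
  case ne_right => exact hyb.symm
  all_goals
    rintro v (rfl | rfl | rfl | rfl | rfl) <;> grind [G.irrefl, G.adj_comm]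

theorem InducesPathAndVertex.encard_eq_five (h : InducesPathAndVertex G a b x y e) :
    ({a, b, x, y, e} : Set V).encard = 5 := by
  have hab : G.Adj a b := (h.adj_left b (by simp)).2 rfl
  have hbx : G.Adj b x := (h.adj_inner_left x (by simp)).2 (.inr rfl)
  have hxy : G.Adj x y := (h.adj_inner_right y (by simp)).2 (.inr rfl)
  have hay : a ≠ y := by
    rintro rfl
    exact hbx.ne' ((h.adj_left x (by simp)).1 hxy.symm)
  have hne_e {u v : V} (hv : v ∈ ({a, b, x, y, e} : Set V)) (huv : G.Adj u v) : u ≠ e := by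
    rintro rfl
    exact h.not_adj v hv huv
  have hae : a ≠ e := hne_e (by simp) hab
  have hbe : b ≠ e := hne_e (by simp) hbx
  have hxe : x ≠ e := hne_e (by simp) hxy
  have hye : y ≠ e := hne_e (by simp) hxy.symm
  rw [Set.encard_insert_of_notMem, Set.encard_insert_of_notMem, Set.encard_insert_of_notMem,
    Set.encard_pair hye]
  · norm_num
  · simp [hxy.ne, hxe]
  · simp [hbx.ne, h.ne_right, hbe]
  · simp [hab.ne, h.ne_left, hay, hae]

theorem InducesPathAndVertex.eq_or_eq_of_adj_adj (h : InducesPathAndVertex G a b x y e) {u v w : V}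
    (hw : w ∈ ({a, b, x, y, e} : Set V)) (hu : u ∈ ({a, b, x, y, e} : Set V))
    (hv : v ∈ ({a, b, x, y, e} : Set V)) (huv : u ≠ v) (hwu : G.Adj w u) (hwv : G.Adj w v) :
    w = b ∨ w = x := by
  rcases hw with rfl | rfl | rfl | rfl | rfl
  · exact absurd (((h.adj_left u hu).1 hwu).trans ((h.adj_left v hv).1 hwv).symm) huv
  · exact .inl rfl
  · exact .inr rfl
  · exact absurd (((h.adj_right u hu).1 hwu).trans ((h.adj_right v hv).1 hwv).symm) huv
  · exact absurd hwu (h.not_adj u hu)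

/-- The isolated vertex and the pair of inner vertices of the path are recognised by their numbers
of neighbours in the set. -/
theorem InducesPathAndVertex.map_eq_and_map_eq_or_eq (h : InducesPathAndVertex G a b x y e)
    {φ : G ≃g G} (hφ : φ '' {a, b, x, y, e} = {a, b, x, y, e}) :
    φ e = e ∧ (φ b = b ∨ φ b = x) ∧ (φ x = b ∨ φ x = x) := by
  set S : Set V := {a, b, x, y, e} with hS
  have haS : a ∈ S := by simp [hS]
  have hbS : b ∈ S := by simp [hS]
  have hxS : x ∈ S := by simp [hS]
  have hyS : y ∈ S := by simp [hS]
  have heS : e ∈ S := by simp [hS]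
  have hmap {v : V} (hv : v ∈ S) : φ v ∈ S := hφ ▸ Set.mem_image_of_mem φ hv
  have hadj {u v : V} : G.Adj u v → G.Adj (φ u) (φ v) := φ.map_adj_iff.2
  have hba : G.Adj b a := (h.adj_inner_left a haS).2 (.inl rfl)
  have hbx : G.Adj b x := (h.adj_inner_left x hxS).2 (.inr rfl)
  have hxy : G.Adj x y := (h.adj_inner_right y hyS).2 (.inr rfl)
  refine ⟨?_, ?_, ?_⟩
  · obtain ⟨v, hv, hφv⟩ : e ∈ φ '' S := hφ.symm ▸ heS
    have hisolated : ∀ w ∈ S, ¬G.Adj v w := fun w hw hvw =>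
      h.not_adj (φ w) (hmap hw) (hφv ▸ hadj hvw)
    rcases hv with rfl | rfl | rfl | rfl | rfl
    · exact absurd hba.symm (hisolated b hbS)
    · exact absurd hbx (hisolated x hxS)
    · exact absurd hxy (hisolated y hyS)
    · exact absurd hxy.symm (hisolated x hxS)
    · exact hφv
  · exact h.eq_or_eq_of_adj_adj (hmap hbS) (hmap haS) (hmap hxS) (φ.injective.ne h.ne_left)
      (hadj hba) (hadj hbx)
  · exact h.eq_or_eq_of_adj_adj (hmap hxS) (hmap hbS) (hmap hyS) (φ.injective.ne h.ne_right)
      (hadj hbx.symm) (hadj hxy)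

/-- An automorphism preserving the set cannot reverse the path `a, b, x, y`, since only `x` has a
common neighbour with `e`; hence it fixes the 4-arc `a, b, x, d, e`. -/
theorem InducesPathAndVertex.isDistinguishing_of_six_le_egirth
    (hpath : InducesPathAndVertex G a b x y e) (hG : 6 ≤ G.egirth)
    (hrigid : ∀ (φ : G ≃g G) (x : ℕ → V), IsNArc G 4 x → (∀ i ≤ 4, φ (x i) = x i) → ∀ v, φ v = v)
    (hxd : G.Adj x d) (hde : G.Adj d e) : IsDistinguishing G {a, b, x, y, e} := by
  intro φ hφ
  have hbd : b ≠ d := by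
    rintro rfl
    exact hpath.not_adj b (by simp) hde.symm
  have hxe : x ≠ e := by
    rintro rfl
    exact hpath.not_adj y (by simp) ((hpath.adj_inner_right y (by simp)).2 (.inr rfl))
  have hab : G.Adj a b := (hpath.adj_left b (by simp)).2 rfl
  have hbx : G.Adj b x := (hpath.adj_inner_left x (by simp)).2 (.inr rfl)
  obtain ⟨hφe, hφb, hφx⟩ := hpath.map_eq_and_map_eq_or_eq hφ
  have hadj {u v : V} : G.Adj u v → G.Adj (φ u) (φ v) := φ.map_adj_iff.2
  have hφde : G.Adj (φ d) e := hφe ▸ hadj hde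
  have hφx : φ x = x := hφx.resolve_left fun hφxb =>
    not_adj_of_six_le_egirth hG (hφxb ▸ hadj hxd) hφde hde.symm hxd.symm hbx
  have hφb : φ b = b := hφb.resolve_right fun h => hbx.ne (φ.injective (h.trans hφx.symm))
  have hφa : φ a = a := by
    have haS : φ a ∈ ({a, b, x, y, e} : Set V) := hφ ▸ Set.mem_image_of_mem φ (by simp)
    exact ((hpath.adj_inner_left _ haS).1 (hφb ▸ hadj hab.symm)).resolve_right fun h =>
      hpath.ne_left (φ.injective (h.trans hφx.symm))
  have hφd : φ d = d :=
    eq_of_adj_of_five_le_egirth (le_trans (by decide) hG) hxe (hφx ▸ hadj hxd) hφde.symm hxd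
      hde.symm
  refine hrigid φ _ (isNArc_fourSeq hab hbx hxd hde hpath.ne_left hbd hxe) fun i hi => ?_
  interval_cases i <;> assumption

theorem exists_isDistinguishing_encard_eq_five [Nonempty V]
    (hcubic : ∀ v, (G.neighborSet v).ncard = 3) (hG : 6 ≤ G.egirth)
    (hrigid : ∀ (φ : G ≃g G) (x : ℕ → V), IsNArc G 4 x → (∀ i ≤ 4, φ (x i) = x i) → ∀ v, φ v = v) :
    ∃ S : Set V, S.encard = 5 ∧ IsDistinguishing G S := by
  have third (v s t : V) := exists_adj_ne_ne_of_ncard_neighborSet_eq_three (hcubic v) s t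
  obtain ⟨x⟩ := ‹Nonempty V›
  obtain ⟨b, hxb, -⟩ := third x x x
  obtain ⟨d, hxd, hdb, -⟩ := third x b b
  obtain ⟨y, hxy, hyb, hyd⟩ := third x b d
  obtain ⟨a, hba, hax, -⟩ := third b x x
  obtain ⟨e, hde, hex, -⟩ := third d x x
  have hpath : InducesPathAndVertex G a b x y e := inducesPathAndVertex_of_six_le_egirth hG
    hba.symm hxb.symm hxd hde hxy hax hdb.symm hex.symm hyb hyd
  exact ⟨{a, b, x, y, e}, hpath.encard_eq_five, hpath.isDistinguishing_of_six_le_egirth hG hrigid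
    hxd hde⟩

end Rigidity

/-- A connected cubic 4-arc-regular graph of girth 6 is the Heawood graph, and its
distinguishing cost equals 5. -/
theorem fourArcRegular_girth_six
    {V : Type*} (Γ : SimpleGraph V)
    (hconn : Γ.Connected)
    (hcubic : ∀ v : V, (Γ.neighborSet v).ncard = 3)
    (hgirth : Γ.egirth = 6)
    (hreg : IsNArcRegular Γ 4) :
    Nonempty (Γ ≃g heawoodGraph) ∧
      (∃ S : Set V, S.encard = 5 ∧ IsDistinguishing Γ S) ∧
      ∀ S : Set V, IsDistinguishing Γ S → 5 ≤ S.encard := by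
  have := hconn.nonempty
  obtain ⟨htrans, hrigid⟩ := hreg
  obtain ⟨c, hfano⟩ := htrans.exists_isFanoIncidence hconn hcubic hgirth
  exact ⟨hfano.nonempty_iso_heawoodGraph,
    exists_isDistinguishing_encard_eq_five hcubic hgirth.ge hrigid,
    fun _ hS => hfano.five_le_encard_of_isDistinguishing htrans hS⟩
end

section
/- Let Γ be a connected cubic arc-transitive simple graph of finite girth that is isomorphic to none of: the complete graph K_4, the complete bipartite graph K_{3,3}, the cube graph Q_3, the Petersen graph, or the Heawood graph. Then the distinguishing cost of Γ is at most 4. -/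
open SimpleGraph

/-- The Petersen graph: vertices are the 2-element subsets of a 5-element set,
two of them adjacent iff they are disjoint. -/
def petersenGraph : SimpleGraph {s : Finset (Fin 5) // s.card = 2} :=
  SimpleGraph.fromRel (fun a b => Disjoint a.1 b.1)
/-- The 3-dimensional cube graph: vertices are the vectors of `{0,1}³`, two adjacent iff
they differ in exactly one coordinate. -/
def cubeGraph : SimpleGraph (Fin 3 → Bool) :=
  SimpleGraph.fromRel (fun x y => (Finset.univ.filter fun i => x i ≠ y i).card = 1)
/-!
An automorphism of a connected cubic arc-transitive graph `G` of girth `g ≥ 4` that fixes an arc of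
length `⌊g/2⌋ + 1` pointwise is the identity. Otherwise `G` would be `(⌊g/2⌋ + 2)`-arc-transitive;
but the ends of such an arc on a shortest cycle are joined by the rest of the cycle, which is too
short to join the ends of an arc leaving that cycle in its last step. It therefore suffices to find
at most four vertices of an arc of length `⌊g/2⌋ + 1`, including its ends, that no automorphism
permutes nontrivially and between which the arc is unique. They are chosen so as to induce an edge
or a path of length two, together with isolated vertices, so that a nontrivial permutation could
only reverse the edge or the path, or swap two isolated vertices. Distances exclude this as soon as
`g ≥ 8`, and for `5 ≤ g ≤ 7` as soon as the ends of the arc are not joined by an arc of length two.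
A graph of girth `5` or `6` in which they always are is the Petersen or the Heawood graph, and girth
`3` or `4` forces `K₄`, `K₃,₃` or the cube.
-/

section

variable {V : Type*} {G : SimpleGraph V}

/-! ### Arcs -/

/-- The sequence `a, x 0, x 1, …`, used to prolong an arc at its initial vertex. -/
def arcCons (a : V) (x : ℕ → V) : ℕ → V
  | 0 => a
  | n + 1 => x n

/-- Some `n`-arc of `G` leads from `u` to `v`. -/
def ArcJoined (G : SimpleGraph V) (n : ℕ) (u v : V) : Prop :=
  ∃ x : ℕ → V, IsNArc G n x ∧ x 0 = u ∧ x n = v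

namespace IsNArc

variable {a b m n : ℕ} {x y : ℕ → V}

theorem arcJoined (hx : IsNArc G n x) : ArcJoined G n (x 0) (x n) :=
  ⟨x, hx, rfl, rfl⟩

theorem shift (hx : IsNArc G n x) {i : ℕ} (him : i + m ≤ n) :
    IsNArc G m fun t => x (i + t) :=
  ⟨fun t _ => hx.1 (i + t) (by lia), fun t _ => hx.2 (i + t) (by lia)⟩

theorem mono (hx : IsNArc G n x) (hmn : m ≤ n) : IsNArc G m x :=
  ⟨fun t _ => hx.1 t (by lia), fun t _ => hx.2 t (by lia)⟩

theorem reverse (hx : IsNArc G n x) : IsNArc G n fun t => x (n - t) := by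
  refine ⟨fun t ht => ?_, fun t ht => ?_⟩
  · have hadj := hx.1 (n - (t + 1)) (by lia)
    rw [show n - (t + 1) + 1 = n - t by lia] at hadj
    exact hadj.symm
  · have hne := hx.2 (n - (t + 2)) (by lia)
    rw [show n - (t + 2) + 2 = n - t by lia] at hne
    exact hne.symm

theorem map (hx : IsNArc G n x) (φ : G ≃g G) : IsNArc G n fun t => φ (x t) :=
  ⟨fun t ht => φ.map_adj_iff.2 (hx.1 t ht), fun t ht h => hx.2 t ht (φ.injective h)⟩

theorem cons (hx : IsNArc G n x) {v : V} (hv : G.Adj v (x 0)) (hne : v ≠ x 1) :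
    IsNArc G (n + 1) (arcCons v x) := by
  refine ⟨fun t ht => ?_, fun t ht => ?_⟩ <;> rcases t with _ | t
  · exact hv
  · exact hx.1 t (by lia)
  · exact hne
  · exact hx.2 t (by lia)

theorem append (hx : IsNArc G a x) (hy : IsNArc G b y) (hxy : x a = y 0)
    (hne : x (a - 1) ≠ y 1) : ArcJoined G (a + b) (x 0) (y b) := by
  set z : ℕ → V := fun t => if t ≤ a then x t else y (t - a)
  have hleft : ∀ t ≤ a, z t = x t := fun t ht => if_pos ht
  have hright : ∀ t, a ≤ t → z t = y (t - a) := by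
    intro t ht
    rcases ht.eq_or_lt with rfl | hlt
    · rw [hleft a le_rfl, hxy, Nat.sub_self]
    · exact if_neg hlt.not_ge
  refine ⟨z, ⟨fun t ht => ?_, fun t ht => ?_⟩, hleft 0 a.zero_le,
    by rw [hright _ (by lia), Nat.add_sub_cancel_left]⟩
  · rcases lt_or_ge t a with hta | hta
    · rw [hleft t hta.le, hleft (t + 1) hta]
      exact hx.1 t hta
    · rw [hright t hta, hright (t + 1) (by lia), Nat.sub_add_comm hta]
      exact hy.1 _ (by lia)
  · rcases lt_trichotomy (t + 1) a with hta | rfl | hta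
    · rw [hleft t (by lia), hleft (t + 2) hta]
      exact hx.2 t hta
    · rw [hleft t (by lia), hright (t + 2) (by lia)]
      simpa using hne
    · rw [hright t (by lia), hright (t + 2) (by lia), Nat.sub_add_comm (by lia)]
      exact hy.2 _ (by lia)

theorem cycleGraph_isContained (hx : IsNArc G n x) (hclosed : x 0 = x n)
    (hinj : ∀ i j, i < j → j < n → x i ≠ x j) : cycleGraph n ⊑ G := by
  have hstep : ∀ u v : Fin n, (v - u).val = 1 → G.Adj (x u) (x v) := by
    intro u v huv
    have hn : NeZero n := ⟨fun h => by simp [h] at v; exact v.elim0⟩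
    have hv : (v : ℕ) = (u + 1) % n := by
      have := congrArg Fin.val (sub_add_cancel v u)
      rw [Fin.val_add, huv, add_comm] at this
      exact this.symm
    have hadj := hx.1 u u.isLt
    rcases (Nat.add_one_le_of_lt u.isLt).lt_or_eq with hu | hu
    · rwa [hv, Nat.mod_eq_of_lt hu]
    · rwa [hv, hu, Nat.mod_self, hclosed, ← congrArg x hu]
  refine ⟨⟨⟨fun i => x i, fun {u v} huv => ?_⟩, fun u v huv => ?_⟩⟩
  · exact (cycleGraph_adj'.1 huv).elim (fun h => (hstep v u h).symm) (hstep u v)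
  · by_contra hne
    rcases lt_or_gt_of_ne hne with h | h
    · exact hinj u v h v.isLt huv
    · exact hinj v u h u.isLt huv.symm

theorem egirth_le (hx : IsNArc G n x) (hn : n ≠ 0) (hclosed : x 0 = x n) :
    G.egirth ≤ n := by
  induction n using Nat.strong_induction_on generalizing x with
  | _ n ih =>
    by_cases hinj : ∀ i j, i < j → j < n → x i ≠ x j
    · have hthree : 2 < n := by
        by_contra! hle
        obtain rfl | rfl : n = 1 ∨ n = 2 := by lia
        · exact (hx.1 0 one_pos).ne hclosed
        · exact hx.2 0 le_rfl hclosed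
      obtain ⟨v, p, hp, hlen⟩ :=
        (cycleGraph_isContained_iff hthree).1 (hx.cycleGraph_isContained hclosed hinj)
      exact hlen ▸ egirth_le_length hp
    · push Not at hinj
      obtain ⟨i, j, hij, hjn, h⟩ := hinj
      have hshort := ih (j - i) (by lia) (hx.shift (i := i) (by lia)) (by lia)
        (by simpa [Nat.add_sub_cancel' hij.le] using h)
      exact hshort.trans (by exact_mod_cast (by lia : j - i ≤ n))

theorem eq_of_add_lt_egirth (hx : IsNArc G a x) (hy : IsNArc G b y)
    (hab : ((a + b : ℕ) : ℕ∞) < G.egirth) (h₀ : x 0 = y 0) (h₁ : x a = y b) :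
    a = b ∧ ∀ i ≤ a, x i = y i := by
  induction a generalizing b x y with
  | zero =>
    have hb : b = 0 := by
      by_contra hb
      exact (hy.egirth_le hb (h₀ ▸ h₁)).not_gt (by simpa using hab)
    exact ⟨hb.symm, fun i hi => by rwa [Nat.le_zero.1 hi]⟩
  | succ a ih =>
    rcases b with _ | b
    · exact absurd hab (hx.egirth_le a.succ_ne_zero (h₀.trans h₁.symm)).not_gt
    by_cases hone : x 1 = y 1
    · have hlt : ((a + b : ℕ) : ℕ∞) < G.egirth :=
        lt_of_le_of_lt (by exact_mod_cast (by lia)) hab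
      obtain ⟨rfl, heq⟩ := ih (hx.shift (i := 1) (by lia)) (hy.shift (i := 1) (by lia)) hlt hone
        (by simpa only [add_comm 1] using h₁)
      refine ⟨rfl, fun i hi => ?_⟩
      rcases i with _ | i
      · exact h₀
      · simpa only [add_comm 1] using heq i (by lia)
    · obtain ⟨z, hz, hz₀, hz₁⟩ := hx.reverse.append hy (by simpa using h₀) (by simpa using hone)
      exact absurd hab (hz.egirth_le (by lia) (by simpa [hz₀, hz₁] using h₁)).not_gt

theorem of_adj {u v : V} (h : G.Adj u v) : IsNArc G 1 (arcCons u fun _ => v) :=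
  ⟨fun i hi => by simpa [Nat.lt_one_iff.1 hi, arcCons] using h, by lia⟩

end IsNArc

namespace ArcJoined

variable {m n : ℕ} {u v : V}

theorem symm (h : ArcJoined G n u v) : ArcJoined G n v u := by
  obtain ⟨x, hx, rfl, rfl⟩ := h
  simpa using hx.reverse.arcJoined

theorem map (h : ArcJoined G n u v) (φ : G ≃g G) : ArcJoined G n (φ u) (φ v) := by
  obtain ⟨x, hx, rfl, rfl⟩ := h
  exact (hx.map φ).arcJoined

theorem eq_of_add_lt_egirth (hm : ArcJoined G m u v) (hn : ArcJoined G n u v)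
    (hmn : ((m + n : ℕ) : ℕ∞) < G.egirth) : m = n := by
  obtain ⟨x, hx, hx₀, hx₁⟩ := hm
  obtain ⟨y, hy, hy₀, hy₁⟩ := hn
  exact (hx.eq_of_add_lt_egirth hy hmn (hx₀.trans hy₀.symm) (hx₁.trans hy₁.symm)).1

theorem of_adj (h : G.Adj u v) : ArcJoined G 1 u v :=
  ⟨_, .of_adj h, rfl, rfl⟩

theorem of_adj_of_adj {w : V} (hu : G.Adj u w) (hv : G.Adj w v) (hne : u ≠ v) :
    ArcJoined G 2 u v :=
  ⟨_, (IsNArc.of_adj hv).cons hu hne, rfl, rfl⟩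

theorem exists_adj_adj (h : ArcJoined G 2 u v) : ∃ w, G.Adj u w ∧ G.Adj w v := by
  obtain ⟨x, hx, rfl, rfl⟩ := h
  exact ⟨x 1, hx.1 0 two_pos, hx.1 1 one_lt_two⟩

theorem egirth_le (h : ArcJoined G n u u) (hn : n ≠ 0) : G.egirth ≤ n := by
  obtain ⟨x, hx, hx₀, hx₁⟩ := h
  exact hx.egirth_le hn (hx₀.trans hx₁.symm)

theorem not_adj (h : ArcJoined G n u v) (hn : n ≠ 1) (hlt : ((n + 1 : ℕ) : ℕ∞) < G.egirth) :
    ¬ G.Adj u v :=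
  fun hadj => hn (h.eq_of_add_lt_egirth (.of_adj hadj) hlt)

end ArcJoined

theorem lt_egirth_of_le {m n : ℕ} (hmn : m ≤ n) (hn : (n : ℕ∞) < G.egirth) :
    (m : ℕ∞) < G.egirth :=
  (Nat.cast_le.2 hmn).trans_lt hn

theorem IsNArc.apply_eq_of_lt_egirth {n : ℕ} {x : ℕ → V} (hx : IsNArc G n x)
    (hn : ((n + n : ℕ) : ℕ∞) < G.egirth) (φ : G ≃g G) (h₀ : φ (x 0) = x 0)
    (h₁ : φ (x n) = x n) : ∀ i ≤ n, φ (x i) = x i :=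
  ((hx.map φ).eq_of_add_lt_egirth hx hn h₀ h₁).2

theorem exists_isCycle_of_egirth_eq {g : ℕ} (hg : G.egirth = g) :
    ∃ (v : V) (p : G.Walk v v), p.IsCycle ∧ p.length = g := by
  obtain ⟨v, p, hp, hlen⟩ := exists_egirth_eq_length.2 fun h =>
    ENat.natCast_ne_top g (hg.symm.trans (egirth_eq_top.2 h))
  exact ⟨v, p, hp, by exact_mod_cast hlen.symm.trans hg⟩

theorem exists_isNArc_of_egirth_eq {g : ℕ} (hg : G.egirth = g) :
    ∃ x, IsNArc G g x ∧ x 0 = x g := by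
  obtain ⟨v, p, hp, rfl⟩ := exists_isCycle_of_egirth_eq hg
  exact ⟨p.getVert, ⟨fun i hi => p.adj_getVert_succ hi,
    fun i hi => hp.getVert_sub_one_ne_getVert_add_one (i := i + 1) (by lia)⟩, by simp⟩

theorem exists_injective_of_egirth_eq {n : ℕ} (hn : 2 < n) (hg : G.egirth = n) :
    ∃ c : Fin n → V, Function.Injective c ∧ ∀ i j, (cycleGraph n).Adj i j → G.Adj (c i) (c j) := by
  obtain ⟨c⟩ := (cycleGraph_isContained_iff hn).2 (exists_isCycle_of_egirth_eq hg)
  exact ⟨c, c.injective, fun _ _ h => c.toHom.map_adj h⟩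

/-! ### Cubic graphs and rigidity of arcs -/

/-- Every vertex has exactly three neighbours. -/
def IsCubic (G : SimpleGraph V) : Prop :=
  ∀ v, (G.neighborSet v).ncard = 3

namespace IsCubic

variable {v w a b c : V}

theorem neighborSet_finite (hG : IsCubic G) (v : V) : (G.neighborSet v).Finite :=
  Set.finite_of_ncard_pos (by rw [hG v]; exact three_pos)

theorem exists_adj_ne_ne (hG : IsCubic G) (v a b : V) : ∃ w, G.Adj v w ∧ w ≠ a ∧ w ≠ b := by
  have hlt : ({a, b} : Set V).ncard < (G.neighborSet v).ncard :=
    ((Set.ncard_insert_le a {b}).trans (by rw [Set.ncard_singleton])).trans_lt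
      (by rw [hG v]; exact Nat.lt_succ_self 2)
  obtain ⟨w, hw, hne⟩ := Set.exists_mem_notMem_of_ncard_lt_ncard hlt
  exact ⟨w, hw, fun h => hne (Or.inl h), fun h => hne (Or.inr h)⟩

theorem neighborSet_eq (hG : IsCubic G) (ha : G.Adj v a) (hb : G.Adj v b) (hc : G.Adj v c)
    (hab : a ≠ b) (hac : a ≠ c) (hbc : b ≠ c) : G.neighborSet v = {a, b, c} := by
  refine (Set.eq_of_subset_of_ncard_le ?_ ?_ (hG.neighborSet_finite v)).symm
  · rintro w (rfl | rfl | rfl) <;> assumption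
  · rw [hG v, Set.ncard_eq_three.2 ⟨a, b, c, hab, hac, hbc, rfl⟩]

theorem eq_or_eq_or_eq (hG : IsCubic G) (ha : G.Adj v a) (hb : G.Adj v b) (hc : G.Adj v c)
    (hab : a ≠ b) (hac : a ≠ c) (hbc : b ≠ c) (hw : G.Adj v w) : w = a ∨ w = b ∨ w = c := by
  rwa [← mem_neighborSet, hG.neighborSet_eq ha hb hc hab hac hbc] at hw

end IsCubic

/-- Only the identity fixes an `s`-arc of `G` vertex by vertex. -/
def IsNArcSemiregular (G : SimpleGraph V) (s : ℕ) : Prop :=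
  ∀ (φ : G ≃g G) (x : ℕ → V), IsNArc G s x → (∀ i ≤ s, φ (x i) = x i) → ∀ v, φ v = v

@[elab_as_elim]
theorem forall_of_preconnected (hconn : G.Preconnected) {u : V} {p : V → Prop} (hu : p u)
    (hstep : ∀ v w, G.Adj v w → p v → p w) (v : V) : p v := by
  obtain ⟨q⟩ := hconn u v
  induction q with
  | nil => exact hu
  | cons h _ ih => exact ih (hstep _ _ h hu)

theorem forall_fixed_of_isNArc {s : ℕ} (hconn : G.Preconnected) (hs : s ≠ 0)
    (hdeg : ∀ v w, ∃ u, G.Adj v u ∧ u ≠ w) {φ : G ≃g G} {x : ℕ → V} (hx : IsNArc G s x)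
    (hfix : ∀ i ≤ s, φ (x i) = x i)
    (hnbr : ∀ y, IsNArc G s y → (∀ i ≤ s, φ (y i) = y i) → ∀ w, G.Adj (y 0) w → φ w = w) (v : V) :
    φ v = v := by
  have hcons : ∀ y w, IsNArc G s y → (∀ i ≤ s, φ (y i) = y i) → G.Adj (y 0) w → w ≠ y 1 →
      IsNArc G s (arcCons w y) ∧ ∀ i ≤ s, φ (arcCons w y i) = arcCons w y i := by
    refine fun y w hy hfix hw hne => ⟨(hy.cons hw.symm hne).mono s.le_succ, fun i hi => ?_⟩
    rcases i with _ | i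
    · exact hnbr y hy hfix w hw
    · exact hfix i (by lia)
  have hrev : ∀ y : ℕ → V, (∀ i ≤ s, φ (y i) = y i) → ∀ i ≤ s, φ (y (s - i)) = y (s - i) :=
    fun y h i _ => h _ (Nat.sub_le s i)
  obtain ⟨y, -, hyfix, rfl⟩ : ∃ y, IsNArc G s y ∧ (∀ i ≤ s, φ (y i) = y i) ∧ y 0 = v := by
    refine forall_of_preconnected hconn (u := x 0) ⟨x, hx, hfix, rfl⟩ ?_ v
    rintro _ w hw ⟨y, hy, hyfix, rfl⟩
    by_cases hne : w = y 1
    · obtain ⟨u, hu, hune⟩ := hdeg (y s) (y (s - 1))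
      obtain ⟨hz, hzfix⟩ := hcons _ u hy.reverse (hrev y hyfix) (by simpa using hu) hune
      refine ⟨_, hz.reverse, hrev _ hzfix, ?_⟩
      obtain ⟨s, rfl⟩ := Nat.exists_eq_succ_of_ne_zero hs
      simp [arcCons, hne]
    · obtain ⟨hz, hzfix⟩ := hcons y w hy hyfix hw hne
      exact ⟨_, hz, hzfix, rfl⟩
  exact hyfix 0 s.zero_le

namespace IsCubic

theorem isNArcTransitive_succ {s : ℕ} (hG : IsCubic G) (hs : IsNArcTransitive G s) {φ : G ≃g G}
    {x : ℕ → V} (hx : IsNArc G s x) (hs₀ : s ≠ 0) (hfix : ∀ i ≤ s, φ (x i) = x i) {w : V}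
    (hw : G.Adj (x 0) w) (hmove : φ w ≠ w) : IsNArcTransitive G (s + 1) := by
  have hfix₁ : φ (x 1) = x 1 := hfix 1 (Nat.one_le_iff_ne_zero.2 hs₀)
  have hw₁ : x 1 ≠ w := by rintro rfl; exact hmove hfix₁
  have hφw₁ : x 1 ≠ φ w := fun h => hw₁ (φ.injective (hfix₁.trans h))
  have hφw : G.Adj (x 0) (φ w) := by simpa [hfix 0 s.zero_le] using φ.map_adj_iff.2 hw
  have hbase : ∀ y, IsNArc G (s + 1) y →
      ∃ ψ : G ≃g G, ∀ i ≤ s + 1, ψ (y i) = arcCons w x i := by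
    intro y hy
    obtain ⟨ψ, hψ⟩ := hs _ x (hy.shift (i := 1) (add_comm 1 s).le) hx
    have hψ' : ∀ i ≤ s, ψ (y (i + 1)) = x i := fun i hi => add_comm 1 i ▸ hψ i hi
    have hadj : G.Adj (x 0) (ψ (y 0)) :=
      hψ' 0 s.zero_le ▸ (ψ.map_adj_iff.2 (hy.1 0 s.succ_pos)).symm
    have hne : ψ (y 0) ≠ x 1 := by
      rw [← hψ' 1 (by lia)]
      exact fun h => hy.2 0 (by lia) (ψ.injective h)
    rcases hG.eq_or_eq_or_eq (hx.1 0 (by lia)) hw hφw hw₁ hφw₁ hmove.symm hadj with h | h | h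
    · exact absurd h hne
    · refine ⟨ψ, fun i hi => ?_⟩
      rcases i with _ | i
      exacts [h, hψ' i (by lia)]
    · refine ⟨ψ.trans φ.symm, fun i hi => φ.symm_apply_eq.2 ?_⟩
      rcases i with _ | i
      exacts [h, (hψ' i (by lia)).trans (hfix i (by lia)).symm]
  intro y z hy hz
  obtain ⟨ψ, hψ⟩ := hbase y hy
  obtain ⟨χ, hχ⟩ := hbase z hz
  exact ⟨ψ.trans χ.symm, fun i hi => χ.symm_apply_eq.2 ((hψ i hi).trans (hχ i hi).symm)⟩

theorem isNArcSemiregular {k : ℕ} (hG : IsCubic G) (hconn : G.Connected)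
    (hone : IsNArcTransitive G 1) (hk : ¬ IsNArcTransitive G (k + 1)) :
    IsNArcSemiregular G k := by
  intro φ x hx hfix
  by_contra hφ
  have htrans : ∀ s ≤ k, IsNArcTransitive G (s + 1) := by
    intro s hs
    induction s with
    | zero => exact hone
    | succ s ih =>
      by_contra hnot
      refine hφ (forall_fixed_of_isNArc hconn.preconnected s.succ_ne_zero
        (fun v w => ?_) (hx.mono hs) (fun i hi => hfix i (hi.trans hs)) fun y hy hyfix w hw => ?_)
      · obtain ⟨u, hu, hne, -⟩ := hG.exists_adj_ne_ne v w w
        exact ⟨u, hu, hne⟩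
      · by_contra hmove
        exact hnot (hG.isNArcTransitive_succ (ih (by lia)) hy s.succ_ne_zero hyfix hw hmove)
  exact hk (htrans k le_rfl)

/-- If two arcs of length `g / 2 + 2` share all but their initial vertex, one running along a
`g`-cycle and the other not, then an automorphism carrying the first to the second would create
a cycle shorter than `g`. -/
theorem not_isNArcTransitive_of_egirth_eq {g : ℕ} (hG : IsCubic G) (hg : G.egirth = g)
    (hfour : 4 ≤ g) : ¬ IsNArcTransitive G (g / 2 + 2) := by
  intro htrans
  obtain ⟨x, hx, hclosed⟩ := exists_isNArc_of_egirth_eq hg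
  obtain ⟨d, hd⟩ : ∃ d, g = d + (g / 2 + 2) := ⟨_, (Nat.sub_add_cancel (by lia)).symm⟩
  obtain ⟨w, hw, hwleft, hwright⟩ := hG.exists_adj_ne_ne (x (d + 1)) (x d) (x (d + 2))
  have hwarc : IsNArc G (g / 2 + 2) (arcCons w fun t => x (d + 1 + t)) :=
    (hx.shift (by lia)).cons hw.symm hwright
  obtain ⟨φ, hφ⟩ := htrans _ _ (hx.shift hd.ge) hwarc
  have hfst : φ (x d) = w := hφ 0 (Nat.zero_le _)
  have hlast : φ (x 0) = x 0 := by
    have h := hφ (g / 2 + 2) le_rfl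
    rwa [← hd, ← hclosed, show arcCons w (fun t => x (d + 1 + t)) (g / 2 + 2) = x g from
      congrArg x (by lia), ← hclosed] at h
  have hshort : ArcJoined G d w (x 0) := by
    simpa [hfst, hlast] using ((hx.mono (m := d) (by lia)).arcJoined.map φ).symm
  have hlong : ArcJoined G (d + 2) w (x 0) := by
    simpa [arcCons] using ((hx.mono (m := d + 1) (by lia)).reverse.cons hw.symm hwleft).arcJoined
  have hlt : ((d + (d + 2) : ℕ) : ℕ∞) < G.egirth := hg ▸ Nat.cast_lt.2 (by lia)
  have := hshort.eq_of_add_lt_egirth hlong hlt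
  lia

end IsCubic

/-! ### Distinguishing sets inside arcs -/

section ImageEq

variable {φ : G ≃g G} {a b c d : V}

theorem fix_or_swap_of_edge_of_isolated (hφ : ⇑φ '' {a, b, c} = {a, b, c}) (hab : G.Adj a b)
    (hac : ¬ G.Adj a c) (hbc : ¬ G.Adj b c) :
    φ c = c ∧ (φ a = a ∧ φ b = b ∨ φ a = b ∧ φ b = a) := by
  have ha : φ a = a ∨ φ a = b ∨ φ a = c := hφ.subset ⟨a, by simp, rfl⟩
  have hb : φ b = a ∨ φ b = b ∨ φ b = c := hφ.subset ⟨b, by simp, rfl⟩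
  have hc : φ c = a ∨ φ c = b ∨ φ c = c := hφ.subset ⟨c, by simp, rfl⟩
  have hφab : G.Adj (φ a) (φ b) := φ.map_adj_iff.2 hab
  have hφbc : ¬ G.Adj (φ b) (φ c) := φ.map_adj_iff.not.2 hbc
  have hne : φ a = φ c → a = c := fun h => φ.injective h
  have hne' : φ b = φ c → b = c := fun h => φ.injective h
  clear hφ
  grind [G.adj_comm, G.irrefl]

theorem fix_or_swap_of_path_of_isolated (hφ : ⇑φ '' {a, b, c, d} = {a, b, c, d})
    (hab : G.Adj a b) (hbc : G.Adj b c) (hne : a ≠ c) (hac : ¬ G.Adj a c) (had : ¬ G.Adj a d)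
    (hbd : ¬ G.Adj b d) (hcd : ¬ G.Adj c d) :
    φ b = b ∧ φ d = d ∧ (φ a = a ∧ φ c = c ∨ φ a = c ∧ φ c = a) := by
  have ha : φ a = a ∨ φ a = b ∨ φ a = c ∨ φ a = d := hφ.subset ⟨a, by simp, rfl⟩
  have hb : φ b = a ∨ φ b = b ∨ φ b = c ∨ φ b = d := hφ.subset ⟨b, by simp, rfl⟩
  have hc : φ c = a ∨ φ c = b ∨ φ c = c ∨ φ c = d := hφ.subset ⟨c, by simp, rfl⟩
  have hd : φ d = a ∨ φ d = b ∨ φ d = c ∨ φ d = d := hφ.subset ⟨d, by simp, rfl⟩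
  have hφab : G.Adj (φ a) (φ b) := φ.map_adj_iff.2 hab
  have hφbc : G.Adj (φ b) (φ c) := φ.map_adj_iff.2 hbc
  have hφac : φ a = φ c → a = c := fun h => φ.injective h
  have hφad : φ a = φ d → a = d := fun h => φ.injective h
  have hφbd : φ b = φ d → b = d := fun h => φ.injective h
  have hφcd : φ c = φ d → c = d := fun h => φ.injective h
  clear hφ
  have hmid : φ b = b := by grind [G.adj_comm, G.irrefl]
  grind [G.adj_comm, G.irrefl]

theorem fix_or_swap_of_edge_of_two_isolated (hφ : ⇑φ '' {a, b, c, d} = {a, b, c, d})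
    (hab : G.Adj a b) (hac : ¬ G.Adj a c) (had : ¬ G.Adj a d) (hbc : ¬ G.Adj b c)
    (hbd : ¬ G.Adj b d) (hcd : ¬ G.Adj c d) :
    (φ a = a ∧ φ b = b ∨ φ a = b ∧ φ b = a) ∧ (φ c = c ∧ φ d = d ∨ φ c = d ∧ φ d = c) := by
  have ha : φ a = a ∨ φ a = b ∨ φ a = c ∨ φ a = d := hφ.subset ⟨a, by simp, rfl⟩
  have hb : φ b = a ∨ φ b = b ∨ φ b = c ∨ φ b = d := hφ.subset ⟨b, by simp, rfl⟩
  have hc : φ c = a ∨ φ c = b ∨ φ c = c ∨ φ c = d := hφ.subset ⟨c, by simp, rfl⟩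
  have hd : φ d = a ∨ φ d = b ∨ φ d = c ∨ φ d = d := hφ.subset ⟨d, by simp, rfl⟩
  have hφab : G.Adj (φ a) (φ b) := φ.map_adj_iff.2 hab
  have hφac : φ a = φ c → a = c := fun h => φ.injective h
  have hφad : φ a = φ d → a = d := fun h => φ.injective h
  have hφbc : φ b = φ c → b = c := fun h => φ.injective h
  have hφbd : φ b = φ d → b = d := fun h => φ.injective h
  have hφcd : φ c = φ d → c = d := fun h => φ.injective h
  clear hφ
  have hedge : φ a = a ∧ φ b = b ∨ φ a = b ∧ φ b = a := by grind [G.adj_comm, G.irrefl]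
  grind [G.adj_comm, G.irrefl]

end ImageEq

section Distinguishing

variable {k m : ℕ} {x : ℕ → V}

theorem IsNArc.arcJoined_of_add_eq {i j : ℕ} (hx : IsNArc G k x) (hij : i + m = j) (hj : j ≤ k) :
    ArcJoined G m (x i) (x j) := by
  subst hij
  exact (hx.shift hj).arcJoined

theorem IsNArc.forall_fixed {i : ℕ} (hx : IsNArc G k x) {φ : G ≃g G} (hik : i + m = k)
    (hlt : ((2 * m : ℕ) : ℕ∞) < G.egirth) (hinit : ∀ j ≤ i, φ (x j) = x j)
    (hlast : φ (x k) = x k) : ∀ j ≤ k, φ (x j) = x j := by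
  subst hik
  intro j hj
  rcases le_total j i with hji | hij
  · exact hinit j hji
  · have htail := (hx.shift le_rfl).apply_eq_of_lt_egirth (two_mul m ▸ hlt) φ
      (hinit i le_rfl) hlast (j - i) (by lia)
    rwa [Nat.add_sub_cancel' hij] at htail

theorem isDistinguishing_triple (hm : 2 ≤ m) (hlt : ((2 * m : ℕ) : ℕ∞) < G.egirth)
    (hsemi : IsNArcSemiregular G (m + 1)) (hx : IsNArc G (m + 1) x)
    (hnot : ¬ ArcJoined G m (x 0) (x (m + 1))) :
    IsDistinguishing G {x 0, x 1, x (m + 1)} := by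
  intro φ hφ
  have hle : ∀ n ≤ 2 * m, (n : ℕ∞) < G.egirth := fun n hn => lt_egirth_of_le hn hlt
  have hjoin : ArcJoined G m (x 1) (x (m + 1)) := hx.arcJoined_of_add_eq (by lia) le_rfl
  obtain ⟨hk, ⟨h0, h1⟩ | ⟨-, h1⟩⟩ := fix_or_swap_of_edge_of_isolated hφ (hx.1 0 m.succ_pos)
    (hx.arcJoined.not_adj (by lia) (hle _ (by lia))) (hjoin.not_adj (by lia) (hle _ (by lia)))
  · exact hsemi φ x hx (hx.forall_fixed (add_comm 1 m) hlt (by grind) hk)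
  · exact absurd (by simpa [h1, hk] using hjoin.map φ) hnot

theorem isDistinguishing_quadruple (hm : 2 ≤ m) (hlt : ((2 * m + 1 : ℕ) : ℕ∞) < G.egirth)
    (hsemi : IsNArcSemiregular G (m + 2)) (hx : IsNArc G (m + 2) x)
    (hnot : ¬ ArcJoined G m (x 0) (x (m + 2))) :
    IsDistinguishing G {x 0, x 1, x 2, x (m + 2)} := by
  intro φ hφ
  have hle : ∀ n ≤ 2 * m + 1, (n : ℕ∞) < G.egirth := fun n hn => lt_egirth_of_le hn hlt
  have hjoin₁ : ArcJoined G (m + 1) (x 1) (x (m + 2)) := hx.arcJoined_of_add_eq (by lia) le_rfl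
  have hjoin₂ : ArcJoined G m (x 2) (x (m + 2)) := hx.arcJoined_of_add_eq (by lia) le_rfl
  have hjoin₀₂ : ArcJoined G 2 (x 0) (x 2) := hx.arcJoined_of_add_eq rfl (by lia)
  obtain ⟨h1, hk, ⟨h0, h2⟩ | ⟨-, h2⟩⟩ := fix_or_swap_of_path_of_isolated hφ
    (hx.1 0 (by lia)) (hx.1 1 (by lia)) (hx.2 0 (by lia))
    (hjoin₀₂.not_adj (by lia) (hle _ (by lia))) (hx.arcJoined.not_adj (by lia) (hle _ (by lia)))
    (hjoin₁.not_adj (by lia) (hle _ (by lia))) (hjoin₂.not_adj (by lia) (hle _ (by lia)))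
  · exact hsemi φ x hx (hx.forall_fixed (i := 2) (add_comm 2 m) (hle _ (by lia)) (by grind) hk)
  · exact absurd (by simpa [h2, hk] using hjoin₂.map φ) hnot

theorem isDistinguishing_quadruple_of_three_le (hm : 3 ≤ m)
    (hlt : ((2 * m + 1 : ℕ) : ℕ∞) < G.egirth) (hsemi : IsNArcSemiregular G (m + 2))
    (hx : IsNArc G (m + 2) x) : IsDistinguishing G {x 0, x 1, x 3, x (m + 2)} := by
  intro φ hφ
  have hle : ∀ n ≤ 2 * m + 1, (n : ℕ∞) < G.egirth := fun n hn => lt_egirth_of_le hn hlt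
  have hjoin₁ : ArcJoined G (m + 1) (x 1) (x (m + 2)) := hx.arcJoined_of_add_eq (by lia) le_rfl
  have hjoin₃ : ArcJoined G (m - 1) (x 3) (x (m + 2)) := hx.arcJoined_of_add_eq (by lia) le_rfl
  have hjoin₀₃ : ArcJoined G 3 (x 0) (x 3) := hx.arcJoined_of_add_eq rfl (by lia)
  have hjoin₁₃ : ArcJoined G 2 (x 1) (x 3) := hx.arcJoined_of_add_eq rfl (by lia)
  obtain ⟨⟨h0, h1⟩ | ⟨h0, h1⟩, ⟨h3, hk⟩ | ⟨h3, -⟩⟩ := fix_or_swap_of_edge_of_two_isolated hφ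
    (hx.1 0 (by lia)) (hjoin₀₃.not_adj (by lia) (hle _ (by lia)))
    (hx.arcJoined.not_adj (by lia) (hle _ (by lia))) (hjoin₁₃.not_adj (by lia) (hle _ (by lia)))
    (hjoin₁.not_adj (by lia) (hle _ (by lia))) (hjoin₃.not_adj (by lia) (hle _ (by lia)))
  · have hinit := (hx.mono (m := 3) (by lia)).apply_eq_of_lt_egirth (hle _ (by lia)) φ h0 h3
    exact hsemi φ x hx
      (hx.forall_fixed (i := 3) (m := m - 1) (by lia) (hle _ (by lia)) hinit hk)
  · have hmoved : ArcJoined G 2 (x 1) (x (m + 2)) := by simpa [h1, h3] using hjoin₁₃.map φ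
    have := hmoved.eq_of_add_lt_egirth hjoin₁ (hle _ (by lia))
    lia
  · have hmoved : ArcJoined G 3 (x 1) (x 3) := by simpa [h0, h3] using hjoin₀₃.map φ
    have := hmoved.eq_of_add_lt_egirth hjoin₁₃ (hle _ (by lia))
    lia
  · have hmoved : ArcJoined G 2 (x 0) (x (m + 2)) := by simpa [h1, h3] using hjoin₁₃.map φ
    have := hmoved.eq_of_add_lt_egirth hx.arcJoined (hle _ (by lia))
    lia

end Distinguishing

/-! ### Recognising a graph from a labelled copy -/

instance : DecidableRel (completeBipartiteGraph (Fin 3) (Fin 3)).Adj :=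
  fun v w => inferInstanceAs (Decidable (v.isLeft ∧ w.isRight ∨ v.isRight ∧ w.isLeft))

instance : DecidableRel cubeGraph.Adj := by
  unfold cubeGraph
  infer_instance

instance : DecidableRel petersenGraph.Adj := by
  unfold petersenGraph
  infer_instance

instance : DecidableRel heawoodGraph.Adj := by
  unfold heawoodGraph
  infer_instance

theorem isCubic_of_card_filter [Fintype V] [DecidableRel G.Adj]
    (h : ∀ v, (Finset.univ.filter (G.Adj v)).card = 3) : IsCubic G :=
  fun v => by rw [← h v, ← Set.ncard_coe_finset, Finset.coe_filter_univ]; rfl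

theorem isCubic_completeGraph : IsCubic (⊤ : SimpleGraph (Fin 4)) :=
  isCubic_of_card_filter (by decide)

theorem isCubic_completeBipartiteGraph : IsCubic (completeBipartiteGraph (Fin 3) (Fin 3)) :=
  isCubic_of_card_filter (by decide)

theorem isCubic_cubeGraph : IsCubic cubeGraph :=
  isCubic_of_card_filter (by decide)

theorem isCubic_petersenGraph : IsCubic petersenGraph :=
  isCubic_of_card_filter (by decide)

theorem isCubic_heawoodGraph : IsCubic heawoodGraph :=
  isCubic_of_card_filter (by decide)

theorem IsCubic.nonempty_iso_of_isContained {W : Type*} [Nonempty W] {H : SimpleGraph W}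
    (hG : IsCubic G) (hconn : G.Connected) (hH : IsCubic H) (h : H ⊑ G) : Nonempty (G ≃g H) := by
  obtain ⟨f⟩ := h
  have hinj : Function.Injective f := f.injective
  have hnbr : ∀ w, f '' H.neighborSet w = G.neighborSet (f w) := by
    refine fun w => Set.eq_of_subset_of_ncard_le ?_ ?_ (hG.neighborSet_finite _)
    · rintro _ ⟨u, hu, rfl⟩
      exact f.toHom.map_adj hu
    · rw [Set.ncard_image_of_injective _ hinj, hG, hH]
  have hsurj : Function.Surjective f := by
    refine fun v => forall_of_preconnected hconn.preconnected
      (u := f (Classical.arbitrary W)) ⟨_, rfl⟩ ?_ v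
    rintro _ v hv ⟨w, rfl⟩
    obtain ⟨u, -, rfl⟩ := (hnbr w).superset hv
    exact ⟨u, rfl⟩
  refine ⟨(⟨Equiv.ofBijective f ⟨hinj, hsurj⟩, ?_⟩ : H ≃g G).symm⟩
  refine fun {u v} => ⟨fun huv => ?_, fun huv => f.toHom.map_adj huv⟩
  obtain ⟨w, hw, hwv⟩ := (hnbr u).superset huv
  exact hinj hwv ▸ hw

theorem IsCubic.nonempty_iso_of_labelling {ι W : Type*} [Nonempty ι] {H : SimpleGraph W}
    (hG : IsCubic G) (hconn : G.Connected) (hH : IsCubic H) {e : ι → W}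
    (he : Function.Bijective e) {f : ι → V} (hf : Function.Injective f)
    (hadj : ∀ i j, H.Adj (e i) (e j) → G.Adj (f i) (f j)) : Nonempty (G ≃g H) := by
  have : Nonempty W := .map e inferInstance
  let e' := Equiv.ofBijective e he
  refine hG.nonempty_iso_of_isContained hconn hH
    ⟨⟨⟨f ∘ e'.symm, fun {u v} huv => hadj _ _ ?_⟩, hf.comp e'.symm.injective⟩⟩
  rwa [← e'.apply_symm_apply u, ← e'.apply_symm_apply v] at huv

/-! ### Arc-transitive cubic graphs of girth three or four -/

theorem injective_vecThree {α : Type*} {a b c : α} (hab : a ≠ b) (hac : a ≠ c) (hbc : b ≠ c) :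
    Function.Injective ![a, b, c] := by
  intro i j h
  fin_cases i <;> fin_cases j <;> simp_all

namespace IsCubic

variable {a b c d v w : V}

theorem exists_iso_cherry (hG : IsCubic G) (hone : IsNArcTransitive G 1) (ha : G.Adj v a)
    (hb : G.Adj v b) (hab : a ≠ b) (hc : G.Adj w c) (hd : G.Adj w d) (hcd : c ≠ d) :
    ∃ φ : G ≃g G, φ v = w ∧ (φ a = c ∧ φ b = d ∨ φ a = d ∧ φ b = c) := by
  obtain ⟨e, he, hea, heb⟩ := hG.exists_adj_ne_ne v a b
  obtain ⟨f, hf, hfc, hfd⟩ := hG.exists_adj_ne_ne w c d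
  obtain ⟨φ, hφ⟩ := hone _ _ (.of_adj he) (.of_adj hf)
  have hv : φ v = w := hφ 0 zero_le_one
  have he : φ e = f := hφ 1 le_rfl
  have hmem : ∀ u, G.Adj v u → u ≠ e → φ u = c ∨ φ u = d := by
    intro u hu hne
    rcases hG.eq_or_eq_or_eq hf hc hd hfc hfd hcd (hv ▸ φ.map_adj_iff.2 hu) with h | h | h
    · exact absurd (φ.injective (h.trans he.symm)) hne
    exacts [.inl h, .inr h]
  have hne : φ a ≠ φ b := φ.injective.ne hab
  refine ⟨φ, hv, ?_⟩
  rcases hmem a ha hea.symm with ha | ha <;> rcases hmem b hb heb.symm with hb | hb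
  · exact absurd (ha.trans hb.symm) hne
  · exact .inl ⟨ha, hb⟩
  · exact .inr ⟨ha, hb⟩
  · exact absurd (ha.trans hb.symm) hne

theorem nonempty_iso_completeGraph (hG : IsCubic G) (hconn : G.Connected)
    (hone : IsNArcTransitive G 1) (hg : G.egirth = 3) :
    Nonempty (G ≃g (⊤ : SimpleGraph (Fin 4))) := by
  obtain ⟨t, -, ht⟩ := exists_injective_of_egirth_eq (n := 3) (by decide) hg
  have h01 : G.Adj (t 0) (t 1) := ht 0 1 (by decide)
  have h02 : G.Adj (t 0) (t 2) := ht 0 2 (by decide)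
  have h12 : G.Adj (t 1) (t 2) := ht 1 2 (by decide)
  have hadj : ∀ a b, G.Adj (t 0) a → G.Adj (t 0) b → a ≠ b → G.Adj a b := by
    intro a b ha hb hab
    obtain ⟨φ, -, ⟨rfl, rfl⟩ | ⟨rfl, rfl⟩⟩ := hG.exists_iso_cherry hone h01 h02 h12.ne ha hb hab
    exacts [φ.map_adj_iff.2 h12, φ.map_adj_iff.2 h12.symm]
  obtain ⟨w, h0w, hw1, hw2⟩ := hG.exists_adj_ne_ne (t 0) (t 1) (t 2)
  have h1w := hadj _ _ h01 h0w hw1.symm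
  have h2w := hadj _ _ h02 h0w hw2.symm
  have hf : ∀ i j : Fin 4, i ≠ j → G.Adj (![t 0, t 1, t 2, w] i) (![t 0, t 1, t 2, w] j) := by
    intro i j hij
    fin_cases i <;> fin_cases j <;> first
      | exact absurd rfl hij
      | simp [h01, h01.symm, h02, h02.symm, h0w, h0w.symm, h12, h12.symm, h1w, h1w.symm, h2w,
          h2w.symm]
  exact hG.nonempty_iso_of_labelling hconn isCubic_completeGraph Function.bijective_id
    (fun i j h => by_contra fun hij => (hf i j hij).ne h) hf

/-- The two neighbours of `v` with equal neighbourhoods may be carried to any two neighbours of `v`,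
so that all three neighbours of `v` have the same neighbourhood. -/
theorem nonempty_iso_completeBipartiteGraph (hG : IsCubic G) (hconn : G.Connected)
    (hone : IsNArcTransitive G 1) (hab : a ≠ b) (htwin : G.neighborSet a = G.neighborSet b) :
    Nonempty (G ≃g completeBipartiteGraph (Fin 3) (Fin 3)) := by
  obtain ⟨v, hav, -, -⟩ := hG.exists_adj_ne_ne a a a
  have hbv : G.Adj b v := htwin.subset hav
  obtain ⟨w, haw, hwv, -⟩ := hG.exists_adj_ne_ne a v v
  obtain ⟨u, hau, huv, huw⟩ := hG.exists_adj_ne_ne a v w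
  obtain ⟨c, hvc, hca, hcb⟩ := hG.exists_adj_ne_ne v a b
  have hac : ∀ z, G.Adj a z → G.Adj c z := by
    obtain ⟨φ, -, h⟩ := hG.exists_iso_cherry hone hav.symm hbv.symm hab hav.symm hvc hca.symm
    have hmap : ∀ z, G.Adj (φ a) z ↔ G.Adj (φ b) z := by
      refine φ.surjective.forall.2 fun z => ?_
      rw [φ.map_adj_iff, φ.map_adj_iff]
      exact Set.ext_iff.1 htwin z
    rcases h with ⟨hφa, hφb⟩ | ⟨hφa, hφb⟩ <;> rw [hφa, hφb] at hmap
    exacts [fun z => (hmap z).1, fun z => (hmap z).2]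
  have hbz : ∀ z, G.Adj a z → G.Adj b z := fun z hz => htwin.subset hz
  have hf : ∀ i j, G.Adj (![a, b, c] i) (![v, w, u] j) := by
    intro i j
    fin_cases i <;> fin_cases j <;> simp [hav, haw, hau, hbz, hac]
  have hleft : Function.Injective ![a, b, c] := injective_vecThree hab hca.symm hcb.symm
  have hright : Function.Injective ![v, w, u] := injective_vecThree hwv.symm huv.symm huw.symm
  refine hG.nonempty_iso_of_labelling hconn isCubic_completeBipartiteGraph Function.bijective_id
    (hleft.sumElim hright fun i j => (hf i j).ne) ?_
  rintro (i | i) (j | j) h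
  · simp at h
  · exact hf i j
  · exact (hf j i).symm
  · simp at h

end IsCubic

/-! ### Spoked cycles -/

/-- The closed walk `c` of length `n` never turns back, and `d i` is a neighbour of `c i` off the
two neighbours `c (i - 1)` and `c (i + 1)`: when `n` is the girth of a cubic graph, `c` is an
`n`-cycle and `d i` is the third neighbour of `c i`. -/
structure IsSpokedCycle (G : SimpleGraph V) {n : ℕ} (c d : ZMod n → V) : Prop where
  adj_succ : ∀ i, G.Adj (c i) (c (i + 1))
  ne_add_two : ∀ i, c i ≠ c (i + 2)
  adj_spoke : ∀ i, G.Adj (c i) (d i)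
  spoke_ne_succ : ∀ i, d i ≠ c (i + 1)
  spoke_succ_ne : ∀ i, d (i + 1) ≠ c i

theorem IsCubic.exists_isSpokedCycle {n : ℕ} (hG : IsCubic G) (hn : 2 < n) (hg : G.egirth = n) :
    ∃ c d : ZMod n → V, IsSpokedCycle G c d := by
  obtain ⟨n, rfl⟩ : ∃ k, n = k + 3 := ⟨n - 3, by lia⟩
  obtain ⟨c, hinj, hadj⟩ : ∃ c : ZMod (n + 3) → V, Function.Injective c ∧
      ∀ i j, (cycleGraph (n + 3)).Adj i j → G.Adj (c i) (c j) :=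
    exists_injective_of_egirth_eq hn hg
  choose d hd hsucc hpred using fun i => hG.exists_adj_ne_ne (c i) (c (i + 1)) (c (i - 1))
  have htwo : ∀ i, c i ≠ c (i + 2) := fun i h => by
    have h2 : ((2 : ℕ) : ZMod (n + 3)) = 0 := by simpa using hinj h
    exact absurd (Nat.le_of_dvd two_pos ((ZMod.natCast_eq_zero_iff 2 (n + 3)).1 h2)) (by lia)
  exact ⟨c, d, fun i => hadj _ _ (cycleGraph_adj.2 (.inr (add_sub_cancel_left i 1))), htwo, hd,
    hsucc, fun i => by simpa using hpred (i + 1)⟩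

theorem exists_natCast_add_eq {n : ℕ} [NeZero n] (i j : ZMod n) :
    ∃ m ≤ n / 2, j = i + (m : ℕ) ∨ i = j + (m : ℕ) := by
  refine ⟨_, ZMod.natAbs_valMinAbs_le (j - i), ?_⟩
  have hcoe := ZMod.coe_valMinAbs (j - i)
  rcases Int.natAbs_eq (j - i).valMinAbs with h | h <;> rw [h] at hcoe
  · left
    rw [← Int.cast_natCast, hcoe, add_sub_cancel]
  · right
    rw [← Int.cast_natCast, ← neg_neg (((Int.natAbs _ : ℕ) : ℤ) : ZMod n), ← Int.cast_neg, hcoe]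
    ring

namespace IsSpokedCycle

variable {n : ℕ} {c d : ZMod n → V}

theorem isNArc_rim (h : IsSpokedCycle G c d) (i : ZMod n) (m : ℕ) :
    IsNArc G m fun t => c (i + t) := by
  refine ⟨fun t _ => ?_, fun t _ => ?_⟩
  · simpa [add_assoc] using h.adj_succ (i + t)
  · simpa [add_assoc] using h.ne_add_two (i + t)

theorem isNArc_spoke_rim (h : IsSpokedCycle G c d) (i : ZMod n) (m : ℕ) :
    IsNArc G (m + 1) (arcCons (d i) fun t => c (i + t)) :=
  (h.isNArc_rim i m).cons (by simpa using (h.adj_spoke i).symm) (by simpa using h.spoke_ne_succ i)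

theorem arcJoined_rim (h : IsSpokedCycle G c d) (i : ZMod n) (m : ℕ) :
    ArcJoined G m (c i) (c (i + m)) := by
  simpa using (h.isNArc_rim i m).arcJoined

theorem arcJoined_spoke_rim (h : IsSpokedCycle G c d) (i : ZMod n) (m : ℕ) :
    ArcJoined G (m + 1) (d i) (c (i + m)) :=
  (h.isNArc_spoke_rim i m).arcJoined

theorem arcJoined_rim_spoke (h : IsSpokedCycle G c d) (i : ZMod n) (m : ℕ) :
    ArcJoined G (m + 1) (c i) (d (i + m)) := by
  rcases m with _ | m
  · simpa using ArcJoined.of_adj (h.adj_spoke i)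
  · have hx := ((h.isNArc_rim i (m + 1)).reverse.cons (v := d (i + (m + 1 : ℕ)))
      (h.adj_spoke _).symm (by simpa [add_assoc] using h.spoke_succ_ne (i + m))).arcJoined.symm
    simpa [arcCons] using hx

theorem arcJoined_spoke (h : IsSpokedCycle G c d) (i : ZMod n) {m : ℕ} (hm : m ≠ 0) :
    ArcJoined G (m + 2) (d i) (d (i + m)) := by
  obtain ⟨m, rfl⟩ := Nat.exists_eq_succ_of_ne_zero hm
  have hx := ((h.isNArc_spoke_rim i (m + 1)).reverse.cons (v := d (i + (m + 1 : ℕ)))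
    (h.adj_spoke _).symm (by simpa [arcCons, add_assoc] using h.spoke_succ_ne (i + m)))
  simpa [arcCons] using hx.arcJoined.symm

theorem eq_of_adj_rim (h : IsSpokedCycle G c d) (hG : IsCubic G) {i : ZMod n} {w : V}
    (hw : G.Adj (c i) w) : w = c (i - 1) ∨ w = c (i + 1) ∨ w = d i := by
  have hne : c (i - 1) ≠ c (i + 1) := by
    simpa only [show i - 1 + 2 = i + 1 by ring] using h.ne_add_two (i - 1)
  have hpred : G.Adj (c i) (c (i - 1)) := by simpa using (h.adj_succ (i - 1)).symm
  have hd : c (i - 1) ≠ d i := by simpa using (h.spoke_succ_ne (i - 1)).symm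
  exact hG.eq_or_eq_or_eq hpred (h.adj_succ i) (h.adj_spoke i) hne hd (h.spoke_ne_succ i).symm hw

theorem exists_arcJoined_spoke_rim [NeZero n] (h : IsSpokedCycle G c d) (i j : ZMod n) :
    ∃ m ≤ n / 2, (m = 0 → i = j) ∧ ArcJoined G (m + 1) (d i) (c j) := by
  obtain ⟨m, hm, rfl | rfl⟩ := exists_natCast_add_eq i j
  · exact ⟨m, hm, by rintro rfl; simp, h.arcJoined_spoke_rim i m⟩
  · exact ⟨m, hm, by rintro rfl; simp, (h.arcJoined_rim_spoke j m).symm⟩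

section Girth

variable (h : IsSpokedCycle G c d) (hg : G.egirth = n)
include h hg

theorem not_adj_spoke (i : ZMod n) {m : ℕ} (hm : m ≠ 0) (hmn : m + 3 < n) :
    ¬ G.Adj (d i) (d (i + m)) :=
  (h.arcJoined_spoke i hm).not_adj (by lia) (hg ▸ Nat.cast_lt.2 hmn)

variable [NeZero n]

theorem rim_injective (hn : 2 < n) : Function.Injective c := by
  intro i j hij
  by_contra hne
  obtain ⟨m, hm, hm₀, hjoin⟩ : ∃ m ≤ n / 2, m ≠ 0 ∧ ArcJoined G m (c i) (c i) := by
    obtain ⟨m, hm, rfl | rfl⟩ := exists_natCast_add_eq i j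
    · exact ⟨m, hm, by rintro rfl; simp at hne, hij ▸ h.arcJoined_rim i m⟩
    · exact ⟨m, hm, by rintro rfl; simp at hne, hij ▸ h.arcJoined_rim j m⟩
  have := Nat.cast_le.1 (hg ▸ hjoin.egirth_le hm₀)
  lia

theorem spoke_injective (hn : 4 < n) : Function.Injective d := by
  intro i j hij
  by_contra hne
  obtain ⟨m, hm, hjoin⟩ : ∃ m ≤ n / 2, ArcJoined G (m + 2) (d i) (d i) := by
    obtain ⟨m, hm, rfl | rfl⟩ := exists_natCast_add_eq i j
    · exact ⟨m, hm, hij ▸ h.arcJoined_spoke (m := m) i (by rintro rfl; simp at hne)⟩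
    · exact ⟨m, hm, hij ▸ h.arcJoined_spoke (m := m) j (by rintro rfl; simp at hne)⟩
  have := Nat.cast_le.1 (hg ▸ hjoin.egirth_le (by lia))
  lia

theorem rim_ne_spoke (hn : 2 < n) (i j : ZMod n) : c i ≠ d j := by
  intro hij
  obtain ⟨m, hm, -, hjoin⟩ := h.exists_arcJoined_spoke_rim j i
  have := Nat.cast_le.1 (hg ▸ (hij ▸ hjoin).egirth_le (by lia))
  lia

theorem not_adj_spoke_rim (hn : 4 < n) {i j : ZMod n} (hij : i ≠ j) : ¬ G.Adj (d i) (c j) := by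
  obtain ⟨m, hm, hm₀, hjoin⟩ := h.exists_arcJoined_spoke_rim i j
  exact hjoin.not_adj (fun h => hij (hm₀ (by lia))) (hg ▸ Nat.cast_lt.2 (by lia))

theorem not_adj_spoke_succ_of_adj_spoke (hn : 5 < n) {i : ZMod n} {w : V} (hw : G.Adj (d i) w) :
    ¬ G.Adj (d (i + 1)) w := by
  intro hw'
  have : Fact (1 < n) := ⟨by lia⟩
  have hne : d i ≠ d (i + 1) := (h.spoke_injective hg (by lia)).ne (by simp)
  have hjoin : ArcJoined G 3 (d i) (d (i + 1)) := by simpa using h.arcJoined_spoke i one_ne_zero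
  exact absurd ((ArcJoined.of_adj_of_adj hw hw'.symm hne).eq_of_add_lt_egirth hjoin
    (hg ▸ Nat.cast_lt.2 hn)) (by decide)

theorem adj_spoke_of_arcJoined_two (hG : IsCubic G) (hn : 4 < n) {i j : ZMod n} (hij : i ≠ j - 1)
    (hij' : i ≠ j + 1) (hjoin : ArcJoined G 2 (d i) (c j)) : G.Adj (d i) (d j) := by
  obtain ⟨w, hiw, hwj⟩ := hjoin.exists_adj_adj
  obtain rfl | rfl | rfl := h.eq_of_adj_rim hG hwj.symm
  · exact absurd hiw (h.not_adj_spoke_rim hg hn hij)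
  · exact absurd hiw (h.not_adj_spoke_rim hg hn hij')
  · exact hiw

end Girth

end IsSpokedCycle

theorem IsSpokedCycle.adj_of_labelling {n : ℕ} {c d : ZMod n → V} (h : IsSpokedCycle G c d)
    {k : ZMod n} (hd : ∀ i, G.Adj (d i) (d (i + k))) {W : Type*} {H : SimpleGraph W}
    {e : ZMod n ⊕ ZMod n → W}
    (hrim : ∀ i j, H.Adj (e (.inl i)) (e (.inl j)) → j = i + 1 ∨ i = j + 1)
    (hspoke : ∀ i j, H.Adj (e (.inl i)) (e (.inr j)) → i = j)
    (hchord : ∀ i j, H.Adj (e (.inr i)) (e (.inr j)) → j = i + k ∨ i = j + k) :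
    ∀ p q, H.Adj (e p) (e q) → G.Adj (Sum.elim c d p) (Sum.elim c d q) := by
  rintro (i | i) (j | j) hij
  · obtain rfl | rfl := hrim i j hij
    exacts [h.adj_succ i, (h.adj_succ j).symm]
  · exact hspoke i j hij ▸ h.adj_spoke i
  · exact hspoke j i hij.symm ▸ (h.adj_spoke j).symm
  · obtain rfl | rfl := hchord i j hij
    exacts [hd i, (hd j).symm]

/-! ### The cube, the Petersen graph and the Heawood graph -/

/-- The vertices of the cube as a face in cyclic order followed by the opposite face. -/
def cubeLabel : ZMod 4 ⊕ ZMod 4 → Fin 3 → Bool :=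
  Sum.elim
    ![![false, false, false], ![true, false, false], ![true, true, false], ![false, true, false]]
    ![![false, false, true], ![true, false, true], ![true, true, true], ![false, true, true]]

/-- The vertices of the Petersen graph as a pentagon `{2i, 2i + 1}` followed by the neighbours
`{2i + 2, 2i + 4}` of its vertices off the pentagon, all modulo `5`. -/
def petersenLabel : ZMod 5 ⊕ ZMod 5 → {s : Finset (Fin 5) // s.card = 2} :=
  Sum.elim ![⟨{0, 1}, rfl⟩, ⟨{2, 3}, rfl⟩, ⟨{4, 0}, rfl⟩, ⟨{1, 2}, rfl⟩, ⟨{3, 4}, rfl⟩]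
    ![⟨{2, 4}, rfl⟩, ⟨{4, 1}, rfl⟩, ⟨{1, 3}, rfl⟩, ⟨{3, 0}, rfl⟩, ⟨{0, 2}, rfl⟩]

/-- The vertices of the Heawood graph as a hexagon (the triangle of coordinate points of the Fano
plane), followed by the third neighbours of its vertices and by the remaining point and line. -/
def heawoodLabel : (ZMod 6 ⊕ ZMod 6) ⊕ Fin 2 → Bool × {v : Fin 3 → ZMod 2 // v ≠ 0} :=
  Sum.elim
    (Sum.elim
      ![(false, ⟨![1, 0, 0], by decide⟩), (true, ⟨![0, 0, 1], by decide⟩),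
        (false, ⟨![0, 1, 0], by decide⟩), (true, ⟨![1, 0, 0], by decide⟩),
        (false, ⟨![0, 0, 1], by decide⟩), (true, ⟨![0, 1, 0], by decide⟩)]
      ![(true, ⟨![0, 1, 1], by decide⟩), (false, ⟨![1, 1, 0], by decide⟩),
        (true, ⟨![1, 0, 1], by decide⟩), (false, ⟨![0, 1, 1], by decide⟩),
        (true, ⟨![1, 1, 0], by decide⟩), (false, ⟨![1, 0, 1], by decide⟩)])
    ![(false, ⟨![1, 1, 1], by decide⟩), (true, ⟨![1, 1, 1], by decide⟩)]

namespace IsCubic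

theorem exists_common_neighbor (hG : IsCubic G) (hone : IsNArcTransitive G 1)
    (hg : G.egirth = (4 : ℕ)) {v a b : V} (ha : G.Adj v a) (hb : G.Adj v b) (hab : a ≠ b) :
    ∃ w, w ≠ v ∧ G.Adj a w ∧ G.Adj b w := by
  obtain ⟨c, hinj, hc⟩ := exists_injective_of_egirth_eq (by decide) hg
  obtain ⟨φ, rfl, h⟩ := hG.exists_iso_cherry hone (hc 1 0 (by decide)) (hc 1 2 (by decide))
    (hinj.ne (by decide)) ha hb hab
  have h03 : G.Adj (φ (c 0)) (φ (c 3)) := φ.map_adj_iff.2 (hc 0 3 (by decide))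
  have h23 : G.Adj (φ (c 2)) (φ (c 3)) := φ.map_adj_iff.2 (hc 2 3 (by decide))
  refine ⟨φ (c 3), φ.injective.ne (hinj.ne (by decide)), ?_⟩
  obtain ⟨rfl, rfl⟩ | ⟨rfl, rfl⟩ := h
  exacts [⟨h03, h23⟩, ⟨h23, h03⟩]

theorem nonempty_iso_cubeGraph (hG : IsCubic G) (hconn : G.Connected)
    (hone : IsNArcTransitive G 1) (hg : G.egirth = (4 : ℕ))
    (htwin : Function.Injective G.neighborSet) : Nonempty (G ≃g cubeGraph) := by
  obtain ⟨c, d, h⟩ := hG.exists_isSpokedCycle (by decide) hg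
  have hmixed := h.rim_ne_spoke hg (by decide)
  have hadd : (1 + 1 : ZMod 4) = 2 ∧ (1 + 2 : ZMod 4) = 3 ∧ (2 + 1 : ZMod 4) = 3 ∧
      (3 + 1 : ZMod 4) = 0 := by decide
  have hopp : ∀ i, ¬ G.Adj (c (i + 2)) (d i) := by
    refine fun i hi => h.ne_add_two i (htwin ?_)
    have hadj : ∀ j, G.Adj (c (j + 1)) (c j) := fun j => (h.adj_succ j).symm
    have hne : c (i + 1) ≠ c (i + 3) := by simpa [add_assoc, hadd] using h.ne_add_two (i + 1)
    have hi3 : G.Adj (c i) (c (i + 3)) := by simpa [add_assoc, hadd] using hadj (i + 3)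
    have hi21 : G.Adj (c (i + 2)) (c (i + 1)) := by simpa [add_assoc, hadd] using hadj (i + 1)
    have hi23 : G.Adj (c (i + 2)) (c (i + 3)) := by simpa [add_assoc, hadd] using h.adj_succ (i + 2)
    rw [hG.neighborSet_eq (h.adj_succ i) hi3 (h.adj_spoke i) hne (hmixed _ _) (hmixed _ _),
      hG.neighborSet_eq hi21 hi23 hi hne (hmixed _ _) (hmixed _ _)]
  have hd : ∀ i, G.Adj (d i) (d (i + 1)) := by
    intro i
    obtain ⟨w, hne, hdw, hcw⟩ :=
      hG.exists_common_neighbor hone hg (h.adj_spoke i) (h.adj_succ i) (h.spoke_ne_succ i)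
    obtain rfl | rfl | rfl := h.eq_of_adj_rim hG hcw
    · simp at hne
    · exact absurd hdw.symm (by simpa [add_assoc, hadd] using hopp i)
    · exact hdw
  have hinj : Function.Injective d := by
    intro i j hij
    have hcases : ∀ i j : ZMod 4, i = j ∨ j = i + 1 ∨ i = j + 1 ∨ j = i + 2 := by decide
    obtain rfl | rfl | rfl | rfl := hcases i j
    · rfl
    · exact absurd hij (hd i).ne
    · exact absurd hij (hd j).ne'
    · exact absurd (hij ▸ h.adj_spoke (i + 2)) (hopp i)
  exact hG.nonempty_iso_of_labelling hconn isCubic_cubeGraph (e := cubeLabel) (by decide)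
    ((h.rim_injective hg (by decide)).sumElim hinj hmixed)
    (h.adj_of_labelling hd (by decide) (by decide) (by decide))

theorem nonempty_iso_petersenGraph (hG : IsCubic G) (hconn : G.Connected)
    (hg : G.egirth = (5 : ℕ)) (hjoin : ∀ u v, ArcJoined G 3 u v → ArcJoined G 2 u v) :
    Nonempty (G ≃g petersenGraph) := by
  obtain ⟨c, d, h⟩ := hG.exists_isSpokedCycle (by decide) hg
  have hd : ∀ i, G.Adj (d i) (d (i + 2)) := fun i =>
    h.adj_spoke_of_arcJoined_two hg hG (by decide) (by revert i; decide) (by revert i; decide)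
      (hjoin _ _ (by simpa using h.arcJoined_spoke_rim i 2))
  exact hG.nonempty_iso_of_labelling hconn isCubic_petersenGraph (e := petersenLabel) (by decide)
    ((h.rim_injective hg (by decide)).sumElim (h.spoke_injective hg (by decide))
      (h.rim_ne_spoke hg (by decide)))
    (h.adj_of_labelling hd (by decide) (by decide) (by decide))

/-- Every `d i` has a third neighbour `e i`, and a `2`-arc from `d i` to `d (i + 2)` can only pass
through `e i = e (i + 2)`. -/
theorem exists_hub (hG : IsCubic G) (hg : G.egirth = (6 : ℕ)) {c d : ZMod 6 → V}
    (h : IsSpokedCycle G c d) (hopp : ∀ i, G.Adj (d i) (d (i + 3)))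
    (hjoin : ∀ i, ArcJoined G 2 (d i) (d (i + 2))) :
    ∃ e : ZMod 6 → V, (∀ i, G.Adj (d i) (e i)) ∧ (∀ i, e (i + 2) = e i) ∧
      ∀ p k, Sum.elim c d p ≠ e k := by
  have hone : ∀ {i j}, j = i + 1 → ¬ G.Adj (d i) (d j) := fun {i j} hj => by
    simpa [hj] using h.not_adj_spoke hg i one_ne_zero (by decide)
  have htwo : ∀ {i j}, j = i + 2 → ¬ G.Adj (d i) (d j) := fun {i j} hj => by
    simpa [hj] using h.not_adj_spoke hg i two_ne_zero (by decide)
  have hrim : ∀ {i j}, G.Adj (d i) (c j) → i = j := fun hij =>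
    by_contra fun hne => h.not_adj_spoke_rim hg (by decide) hne hij
  choose e hadj hec hed using fun i => hG.exists_adj_ne_ne (d i) (c i) (d (i + 3))
  have hnbr : ∀ {i w}, G.Adj (d i) w → w = c i ∨ w = d (i + 3) ∨ w = e i := fun {i w} =>
    hG.eq_or_eq_or_eq (h.adj_spoke i).symm (hopp i) (hadj i) (h.rim_ne_spoke hg (by decide) _ _)
      (hec i).symm (hed i).symm
  have hmid : ∀ {i j w}, j = i + 2 ∨ i = j + 2 → G.Adj (d i) w → G.Adj (d j) w → w = e i := by
    intro i j w hij hi hj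
    have hshift : ∀ i j : ZMod 6, j = i + 2 ∨ i = j + 2 →
        j ≠ i ∧ (i + 3 = j + 1 ∨ j = i + 3 + 1) := by decide
    obtain rfl | rfl | heq := hnbr hi
    · exact absurd (hrim hj) (hshift i j hij).1
    · exact ((hshift i j hij).2.elim (hone · hj) (hone · hj.symm)).elim
    · exact heq
  have hrim_ne : ∀ j k, c j ≠ e k := fun j k heq => hec k (hrim (heq ▸ hadj k) ▸ heq.symm)
  have hspoke_ne : ∀ j k, d j ≠ e k := by
    intro j k heq
    have hk : G.Adj (d k) (d j) := heq ▸ hadj k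
    have hcases : ∀ j k : ZMod 6,
        j = k ∨ j = k + 1 ∨ k = j + 1 ∨ j = k + 2 ∨ k = j + 2 ∨ j = k + 3 := by decide
    obtain rfl | hj | hj | hj | hj | rfl := hcases j k
    exacts [hk.ne rfl, hone hj hk, hone hj hk.symm, htwo hj hk, htwo hj hk.symm, hed _ heq.symm]
  refine ⟨e, hadj, fun i => ?_, Sum.rec hrim_ne hspoke_ne⟩
  obtain ⟨w, hw, hw'⟩ := (hjoin i).exists_adj_adj
  exact (hmid (.inr rfl) hw'.symm hw).symm.trans (hmid (.inl rfl) hw hw'.symm)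

theorem nonempty_iso_heawoodGraph (hG : IsCubic G) (hconn : G.Connected)
    (hg : G.egirth = (6 : ℕ)) (hjoin : ∀ u v, ArcJoined G 4 u v → ArcJoined G 2 u v) :
    Nonempty (G ≃g heawoodGraph) := by
  obtain ⟨c, d, h⟩ := hG.exists_isSpokedCycle (by decide) hg
  have hopp : ∀ i, G.Adj (d i) (d (i + 3)) := fun i =>
    h.adj_spoke_of_arcJoined_two hg hG (by decide) (by revert i; decide) (by revert i; decide)
      (hjoin _ _ (by simpa using h.arcJoined_spoke_rim i 3))
  obtain ⟨e, hadj, hperiod, hout⟩ := hG.exists_hub hg h hopp fun i =>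
    hjoin _ _ (by simpa using h.arcJoined_spoke i two_ne_zero)
  have hspoke := h.spoke_injective hg (by decide)
  have hne : e 0 ≠ e 1 := fun heq =>
    h.not_adj_spoke_succ_of_adj_spoke hg (by decide) (hadj 0) (heq ▸ hadj 1)
  have hhub : Function.Injective fun j : Fin 2 => e j.val := by
    simp [Function.Injective, Fin.forall_fin_two, hne, hne.symm]
  have hcycle := h.adj_of_labelling hopp (H := heawoodGraph) (e := heawoodLabel ∘ .inl)
    (by decide) (by decide) (by decide)
  have hhubs : ∀ p (j : Fin 2), heawoodGraph.Adj (heawoodLabel (.inl p)) (heawoodLabel (.inr j)) →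
      G.Adj (Sum.elim c d p) (e j.val) := by
    have hlabel : ∀ p (j : Fin 2),
        heawoodGraph.Adj (heawoodLabel (.inl p)) (heawoodLabel (.inr j)) →
          ∃ i, p = .inr i ∧ (i = j.val ∨ i = j.val + 2 ∨ i = j.val + 2 + 2) := by
      decide
    intro p j hpj
    obtain ⟨i, rfl, hi⟩ := hlabel p j hpj
    have heq : e i = e j.val := by rcases hi with rfl | rfl | rfl <;> simp only [hperiod]
    exact heq ▸ hadj i
  refine hG.nonempty_iso_of_labelling hconn isCubic_heawoodGraph (e := heawoodLabel) (by decide)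
    (((h.rim_injective hg (by decide)).sumElim hspoke (h.rim_ne_spoke hg (by decide))).sumElim
      hhub fun p j => hout p j.val) ?_
  rintro (p | i) (q | j) hij
  · exact hcycle p q hij
  · exact hhubs p j hij
  · exact (hhubs q i hij.symm).symm
  · exact absurd hij (by revert i j; decide)

end IsCubic

/-! ### The distinguishing cost -/

theorem encard_quadruple_le (a b c d : V) : ({a, b, c, d} : Set V).encard ≤ 4 := by
  classical
  have hcard := Finset.card_le_four (a := a) (b := b) (c := c) (d := d)
  rw [← Nat.cast_le (α := ℕ∞), ← Set.encard_coe_eq_coe_finsetCard] at hcard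
  simpa using hcard

namespace IsCubic

theorem isNArcSemiregular_of_egirth_eq (hG : IsCubic G) (hconn : G.Connected)
    (hone : IsNArcTransitive G 1) {g : ℕ} (hg : G.egirth = g) (hfour : 4 ≤ g) :
    IsNArcSemiregular G (g / 2 + 1) :=
  hG.isNArcSemiregular hconn hone (hG.not_isNArcTransitive_of_egirth_eq hg hfour)

theorem exists_isDistinguishing_of_egirth_eq_five (hG : IsCubic G) (hconn : G.Connected)
    (hone : IsNArcTransitive G 1) (hg : G.egirth = (5 : ℕ))
    (hpetersen : ¬ Nonempty (G ≃g petersenGraph)) :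
    ∃ S : Set V, S.encard ≤ 4 ∧ IsDistinguishing G S := by
  obtain ⟨u, v, ⟨x, hx, rfl, rfl⟩, hnot⟩ : ∃ u v, ArcJoined G 3 u v ∧ ¬ ArcJoined G 2 u v := by
    by_contra! hjoin
    exact hpetersen (hG.nonempty_iso_petersenGraph hconn hg hjoin)
  refine ⟨{x 0, x 1, x 3}, by simpa using encard_quadruple_le (x 0) (x 1) (x 3) (x 3), ?_⟩
  exact isDistinguishing_triple le_rfl (hg ▸ Nat.cast_lt.2 (by decide))
    (hG.isNArcSemiregular_of_egirth_eq hconn hone hg (by decide)) hx hnot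

theorem exists_arcJoined_four_not_arcJoined_two (hG : IsCubic G) (hconn : G.Connected) {g : ℕ}
    (hg : G.egirth = g) (hsix : 6 ≤ g) (hheawood : ¬ Nonempty (G ≃g heawoodGraph)) :
    ∃ u v, ArcJoined G 4 u v ∧ ¬ ArcJoined G 2 u v := by
  obtain rfl | hseven := hsix.eq_or_lt
  · by_contra! hjoin
    exact hheawood (hG.nonempty_iso_heawoodGraph hconn hg hjoin)
  · obtain ⟨x, hx, -⟩ := exists_isNArc_of_egirth_eq hg
    have hfour := (hx.mono (show 4 ≤ g by lia)).arcJoined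
    exact ⟨_, _, hfour, fun htwo =>
      absurd (hfour.eq_of_add_lt_egirth htwo (hg ▸ Nat.cast_lt.2 hseven)) (by decide)⟩

theorem exists_isDistinguishing_of_six_le_egirth (hG : IsCubic G) (hconn : G.Connected)
    (hone : IsNArcTransitive G 1) {g : ℕ} (hg : G.egirth = g) (hsix : 6 ≤ g)
    (hheawood : ¬ Nonempty (G ≃g heawoodGraph)) :
    ∃ S : Set V, S.encard ≤ 4 ∧ IsDistinguishing G S := by
  have hsemi := hG.isNArcSemiregular_of_egirth_eq hconn hone hg (by lia)
  obtain ⟨m, hm⟩ : ∃ m, g / 2 = m + 1 := ⟨g / 2 - 1, by lia⟩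
  have hlt : ((2 * m + 1 : ℕ) : ℕ∞) < G.egirth := hg ▸ Nat.cast_lt.2 (by lia)
  rw [hm] at hsemi
  obtain rfl | hthree : m = 2 ∨ 3 ≤ m := by lia
  · obtain ⟨u, v, ⟨x, hx, rfl, rfl⟩, hnot⟩ :=
      hG.exists_arcJoined_four_not_arcJoined_two hconn hg hsix hheawood
    exact ⟨_, encard_quadruple_le .., isDistinguishing_quadruple le_rfl hlt hsemi hx hnot⟩
  · obtain ⟨x, hx, -⟩ := exists_isNArc_of_egirth_eq hg
    exact ⟨_, encard_quadruple_le ..,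
      isDistinguishing_quadruple_of_three_le hthree hlt hsemi (hx.mono (by lia))⟩

end IsCubic

end

/-- A connected cubic arc-transitive graph of finite girth which is none of `K₄`,
`K_{3,3}`, the cube, the Petersen graph, or the Heawood graph has distinguishing cost
at most 4. -/
theorem cost_le_four_of_cubic_arcTransitive
    {V : Type*} (Γ : SimpleGraph V)
    (hconn : Γ.Connected)
    (hcubic : ∀ v : V, (Γ.neighborSet v).ncard = 3)
    (hat : IsNArcTransitive Γ 1)
    (hgirth : Γ.egirth ≠ ⊤)
    (hnotK4 : ¬ Nonempty (Γ ≃g (⊤ : SimpleGraph (Fin 4))))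
    (hnotK33 : ¬ Nonempty (Γ ≃g completeBipartiteGraph (Fin 3) (Fin 3)))
    (hnotCube : ¬ Nonempty (Γ ≃g cubeGraph))
    (hnotPetersen : ¬ Nonempty (Γ ≃g petersenGraph))
    (hnotHeawood : ¬ Nonempty (Γ ≃g heawoodGraph)) :
    ∃ S : Set V, S.encard ≤ 4 ∧ IsDistinguishing Γ S := by
  have hG : IsCubic Γ := hcubic
  obtain ⟨g, hg⟩ := ENat.ne_top_iff_exists.1 hgirth
  have hg : Γ.egirth = g := hg.symm
  have hthree : 3 ≤ g := by exact_mod_cast hg ▸ Γ.three_le_egirth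
  obtain rfl | rfl | rfl | hsix : g = 3 ∨ g = 4 ∨ g = 5 ∨ 6 ≤ g := by lia
  · exact absurd (hG.nonempty_iso_completeGraph hconn hat hg) hnotK4
  · by_cases htwin : Function.Injective Γ.neighborSet
    · exact absurd (hG.nonempty_iso_cubeGraph hconn hat hg htwin) hnotCube
    · obtain ⟨a, b, hab, hne⟩ := Function.not_injective_iff.1 htwin
      exact absurd (hG.nonempty_iso_completeBipartiteGraph hconn hat hne hab) hnotK33
  · exact hG.exists_isDistinguishing_of_egirth_eq_five hconn hat hg hnotPetersen
  · exact hG.exists_isDistinguishing_of_six_le_egirth hconn hat hg hsix hnotHeawood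
end
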